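/- arXiv:math/0302037 — 2 statements merged into one kernel-verified Lean document; each statement's English description precedes it below -/
import Mathlib

section
/- Let x, y ∈ W_n with x ≤ y in the Bruhat order, ℓ_t(x) = ℓ_t(y) = l, and y ∈ X_n^{(l)}·𝔖_{l,n−l}. Then x ∈ X_n^{(l)}·𝔖_{l,n−l}. -/
open scoped Classical

noncomputable section

/-! ## The hyperoctahedral group `W_n` as signed permutations of `I_n ⊆ ℤ` -/

abbrev P := Equiv.Perm ℤ

/-- `W_n` : permutations of `I_n = {±1, …, ±n}` commuting with `i ↦ -i`,
realized as permutations of `ℤ` fixing everything outside `I_n`. -/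
def Wset (n : ℕ) : Set P :=
  {π | (∀ i : ℤ, π (-i) = - π i) ∧ ∀ i : ℤ, (n : ℤ) < |i| → π i = i}

/-- the generator `t = (1, -1)` -/
def tgen : P := Equiv.swap 1 (-1)

/-- the generator `s_i = (i, i+1)(-i, -(i+1))` -/
def sgen (i : ℕ) : P :=
  Equiv.swap (i : ℤ) ((i : ℤ) + 1) * Equiv.swap (-(i : ℤ)) (-((i : ℤ) + 1))

/-- the generating set `S_n = {t, s_1, …, s_{n-1}}` -/
def Sset (n : ℕ) : Set P := insert tgen (sgen '' Set.Icc 1 (n - 1))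

/-- the length function of `W_n` with respect to `S_n` -/
def len (n : ℕ) (w : P) : ℕ :=
  sInf {k | ∃ l : List P, (∀ g ∈ l, g ∈ Sset n) ∧ l.prod = w ∧ l.length = k}

/-- number of occurrences of `tgen` in a list -/
def tcount (l : List P) : ℕ := (l.map (fun g => if g = tgen then 1 else 0)).sum

/-- `ℓ_t(w)` : the number of occurrences of `t` in a (any) reduced expression of `w` -/
def tlen (n : ℕ) (w : P) : ℕ :=
  sInf {k | ∃ l : List P, (∀ g ∈ l, g ∈ Sset n) ∧ l.prod = w ∧
    l.length = len n w ∧ tcount l = k}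

/-- the Bruhat order on `W_n` : `x ≤ y` iff some reduced expression of `y`
has a subword whose product is `x`. -/
def bruhat (n : ℕ) (x y : P) : Prop :=
  ∃ l l' : List P, (∀ g ∈ l, g ∈ Sset n) ∧ l.prod = y ∧ l.length = len n y ∧
    List.Sublist l' l ∧ l'.prod = x

/-! ## Generalized Robinson–Schensted correspondence -/

abbrev Tab := List (List ℕ)

/-- row insertion of `x` into one row; returns the new row and the bumped entry (if any) -/
def insRow (x : ℕ) : List ℕ → List ℕ × Option ℕ
  | [] => ([x], none)
  | y :: ys =>
    if x < y then (x :: ys, some y)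
    else
      let p := insRow x ys
      (y :: p.1, p.2)

/-- Schensted insertion of `x` into a tableau; returns the new tableau
and the (row, column) coordinates of the newly created box. -/
def insTab (x : ℕ) : Tab → Tab × ℕ × ℕ
  | [] => ([[x]], 0, 0)
  | row :: rest =>
    let p := insRow x row
    match p.2 with
    | none => (p.1 :: rest, 0, row.length)
    | some b =>
      let q := insTab b rest
      (p.1 :: q.1, q.2.1 + 1, q.2.2)

/-- place the label `lbl` at the end of row `pos.1` of the recording tableau -/
def place (lbl : ℕ) (pos : ℕ × ℕ) (T : Tab) : Tab :=
  if pos.1 < T.length then T.set pos.1 ((T.getD pos.1 []) ++ [lbl]) else T ++ [[lbl]]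

/-- one step of the generalized RS algorithm: insert `|π(i)|` into `A⁺` or `A⁻`
according to the sign of `π(i)`, and record `i` in the corresponding `B`-tableau. -/
def RSstep (π : P) (st : (Tab × Tab) × (Tab × Tab)) (i : ℕ) : (Tab × Tab) × (Tab × Tab) :=
  let v := (π (i : ℤ)).natAbs
  if 0 < π (i : ℤ) then
    let p := insTab v st.1.1
    ((p.1, st.1.2), (place i p.2 st.2.1, st.2.2))
  else
    let p := insTab v st.1.2
    ((st.1.1, p.1), (st.2.1, place i p.2 st.2.2))

def RSfull (n : ℕ) (π : P) : (Tab × Tab) × (Tab × Tab) :=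
  (((List.range n).map (· + 1)).foldl (RSstep π)) ((([], []), ([], [])))

/-- the insertion bitableau `A_n(π) = (A⁺, A⁻)` -/
def Atab (n : ℕ) (π : P) : Tab × Tab := (RSfull n π).1

/-- the recording bitableau `B_n(π) = (B⁺, B⁻)` -/
def Btab (n : ℕ) (π : P) : Tab × Tab := (RSfull n π).2

/-- `T` is a standard Young tableau -/
def IsStdTab (T : Tab) : Prop :=
  (∀ row ∈ T, row ≠ [] ∧ row.Chain' (· < ·)) ∧
  T.Chain' (fun r1 r2 => r2.length ≤ r1.length) ∧
  ∀ i j : ℕ, i + 1 < T.length → j < (T.getD (i + 1) []).length →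
    (T.getD i []).getD j 0 < (T.getD (i + 1) []).getD j 0

/-- `(T₁, T₂)` is an `n`-standard bitableau: both standard, entry sets disjoint
with union `{1, …, n}` -/
def IsNStdBitab (n : ℕ) (p : Tab × Tab) : Prop :=
  IsStdTab p.1 ∧ IsStdTab p.2 ∧ (p.1.flatten ++ p.2.flatten).Perm (List.range' 1 n)

/-- the shape of a bitableau -/
def shape2 (p : Tab × Tab) : List ℕ × List ℕ := (p.1.map List.length, p.2.map List.length)

/-! ## Knuth relations -/

/-- `t_i = (i, -i)` -/
def ttgen (i : ℕ) : P := Equiv.swap (i : ℤ) (-(i : ℤ))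

/-- `S'_n = S_n ∪ {t_1, …, t_n}` -/
def Sprime (n : ℕ) : Set P := Sset n ∪ (ttgen '' Set.Icc 1 n)

/-- the extended left descent set `L'(w)` -/
def Ldesc (n : ℕ) (w : P) : Set P := {u ∈ Sprime n | len n (u * w) < len n w}

/-- the elementary relation `x —s→ y` -/
def knuthStep (n : ℕ) (x y : P) : Prop :=
  ∃ i ∈ Set.Icc 1 (n - 1), y = sgen i * x ∧ len n x < len n y ∧
    ¬ (Ldesc n x ⊆ Ldesc n y)

/-- the relation `x ↔_L y` -/
def knuthRel (n : ℕ) : P → P → Prop :=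
  Relation.ReflTransGen (fun a b => knuthStep n a b ∨ knuthStep n b a)

/-! ## Parabolic subgroups, coset representatives and the decomposition -/

/-- the parabolic subgroup `𝔖_n = ⟨s_1, …, s_{n-1}⟩` -/
def SymN (n : ℕ) : Subgroup P := Subgroup.closure (sgen '' Set.Icc 1 (n - 1))

/-- the parabolic subgroup `𝔖_{l, n-l} = ⟨{s_1, …, s_{n-1}} \ {s_l}⟩` -/
def SymLR (n l : ℕ) : Subgroup P :=
  Subgroup.closure (sgen '' {i | 1 ≤ i ∧ i ≤ n - 1 ∧ i ≠ l})

/-- `Y_{l, n-l}` : minimal length representatives of left cosets of `𝔖_{l,n-l}` in `𝔖_n` -/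
def Yset (n l : ℕ) : Set P :=
  {w | w ∈ SymN n ∧ ∀ u ∈ SymLR n l, len n w ≤ len n (w * u)}

/-- `X_n` : minimal length representatives of the left cosets `w 𝔖_n` in `W_n` -/
def Xset (n : ℕ) : Set P :=
  {w | w ∈ Wset n ∧ ∀ u ∈ SymN n, len n w ≤ len n (w * u)}

/-- `X_n^{(l)}` -/
def Xl (n l : ℕ) : Set P := {w ∈ Xset n | tlen n w = l}

/-- `r_1 = t`, `r_{i+1} = s_i r_i` -/
def rgen : ℕ → P
  | 0 => 1
  | 1 => tgen
  | (i + 2) => sgen (i + 1) * rgen (i + 1)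

/-- `a_l = r_1 r_2 ⋯ r_l` -/
def al (l : ℕ) : P := ((List.range l).map (fun k => rgen (k + 1))).prod

/-- the set `X_n^{(l)} ⬝ 𝔖_{l, n-l}` -/
def XSset (n l : ℕ) : Set P := Set.image2 (· * ·) (Xl n l) (SymLR n l : Set P)

/-- `w = a ⬝ a_l ⬝ σ ⬝ b⁻¹` is the canonical decomposition of `w`
(with `a, b ∈ Y_{l,n-l}`, `σ ∈ 𝔖_{l,n-l}` and additivity of lengths) -/
def IsDecomp (n l : ℕ) (w a σ b : P) : Prop :=
  a ∈ Yset n l ∧ b ∈ Yset n l ∧ σ ∈ SymLR n l ∧ w = a * al l * σ * b⁻¹ ∧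
    len n w = len n a + len n (al l) + len n σ + len n b

/-- the relation `w ⇝_L w'` -/
def squig (n : ℕ) (w w' : P) : Prop :=
  ∃ l a σ b a' σ', tlen n w = l ∧ tlen n w' = l ∧
    IsDecomp n l w a σ b ∧ IsDecomp n l w' a' σ' b ∧ knuthRel n σ σ'

/-! ## The two-parameter Iwahori–Hecke algebra and Kazhdan–Lusztig data -/

/-- the ring `A = ℤ[V^{±1}, v^{±1}]`, as the group algebra of `Γ = ℤ × ℤ`
(a monomial `V^i v^j` corresponds to `(i,j) ∈ ℤ × ℤ`). -/
abbrev RR := AddMonoidAlgebra ℤ (ℤ × ℤ)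

/-- the monomial with exponent `g` -/
def mono (g : ℤ × ℤ) : RR := AddMonoidAlgebra.single g 1

/-- `Γ₋` for the lexicographic order with `V ≫ v`: `V^i v^j < 1` -/
def Gneg (g : ℤ × ℤ) : Prop := g.1 < 0 ∨ (g.1 = 0 ∧ g.2 < 0)

/-- an element of `ℤ[Γ₋]` : all monomials lie in `Γ₋` -/
def inNeg (f : RR) : Prop := ∀ g ∈ f.coeff.support, Gneg g

/-- the bar involution of `A`, `V ↦ V⁻¹`, `v ↦ v⁻¹` -/
def barR : RR → RR := fun f => .ofCoeff (Finsupp.equivMapDomain (Equiv.neg (ℤ × ℤ)) f.coeff)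

/-- the parameter `v_s` of a generator (`v_t = V`, `v_{s_i} = v`) -/
def vgen (g : P) : RR := if g = tgen then mono (1, 0) else mono (0, 1)

/-- the inverse `v_s⁻¹` of the parameter of a generator -/
def vgenInv (g : P) : RR := if g = tgen then mono (-1, 0) else mono (0, -1)

/-- the free `A`-module with basis indexed by permutations; the Hecke algebra
`H_n` is carried by the elements supported on `W_n`. -/
abbrev HH := P →₀ RR

/-- the standard basis element `T_w` -/
def TT (w : P) : HH := Finsupp.single w 1

/-- All the data attached to the Iwahori–Hecke algebra `H_n` of `W_n` over
`A = ℤ[V^{±1}, v^{±1}]`: the multiplication, the bar involution, the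
Kazhdan–Lusztig basis `C_w = Σ_y P*_{y,w} T_y` (for the order on `Γ` given
by `Γ₊ = {V^i v^j : i > 0} ∪ {v^j : j > 0}`), and Lusztig's `M`-polynomials,
together with their defining properties. -/
structure KLData (n : ℕ) where
  mul : HH → HH → HH
  mul_add_left : ∀ a b c, mul (a + b) c = mul a c + mul b c
  mul_add_right : ∀ a b c, mul a (b + c) = mul a b + mul a c
  mul_smul_left : ∀ (r : RR) a b, mul (r • a) b = r • mul a b
  mul_smul_right : ∀ (r : RR) a b, mul a (r • b) = r • mul a b
  mul_assoc : ∀ a b c, mul (mul a b) c = mul a (mul b c)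
  one_mul : ∀ a, mul (TT 1) a = a
  mul_one : ∀ a, mul a (TT 1) = a
  /-- `T_w T_{w'} = T_{w w'}` when lengths add -/
  T_mul : ∀ w w', w ∈ Wset n → w' ∈ Wset n →
    len n (w * w') = len n w + len n w' → mul (TT w) (TT w') = TT (w * w')
  /-- the quadratic relations `T_s² = T_1 + (v_s - v_s⁻¹) T_s` -/
  T_sq : ∀ g ∈ Sset n, mul (TT g) (TT g) = TT 1 + (vgen g - vgenInv g) • TT g
  bar : HH → HH
  bar_add : ∀ a b, bar (a + b) = bar a + bar b
  bar_smul : ∀ (r : RR) a, bar (r • a) = barR r • bar a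
  bar_mul : ∀ a b, bar (mul a b) = mul (bar a) (bar b)
  /-- `bar T_s = T_s⁻¹ = T_s + (v_s⁻¹ - v_s) T_1` -/
  bar_gen : ∀ g ∈ Sset n, bar (TT g) = TT g + (vgenInv g - vgen g) • TT 1
  /-- the Kazhdan–Lusztig basis element `C_w`, whose coordinate at `T_y` is
  the polynomial `P*_{y,w}` -/
  C : P → HH
  /-- `P*_{w,w} = 1` -/
  C_self : ∀ w, C w w = 1
  /-- `P*_{y,w} = 0` unless `y ≤ w` -/
  C_supp : ∀ w y, C w y ≠ 0 → bruhat n y w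
  /-- `P*_{y,w} ∈ ℤ[Γ₋]` for `y < w` -/
  C_neg : ∀ w y, y ≠ w → inNeg (C w y)
  /-- `C_w` is bar-invariant -/
  C_bar : ∀ w, w ∈ Wset n → bar (C w) = C w
  /-- `M s w` is the finitely supported family `z ↦ M^s_{z,w}` -/
  M : P → P → (P →₀ RR)
  M_supp : ∀ s w z, (M s w) z ≠ 0 → bruhat n z w ∧ z ≠ w ∧ len n (s * z) < len n z
  /-- the symmetry condition `bar M^s_{y,w} = M^s_{y,w}` -/
  M_bar : ∀ s w z, barR ((M s w) z) = (M s w) z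
  /-- the condition `M^s_{y,w} + Σ_{y<z<w, sz<z} P*_{y,z} M^s_{z,w} - v_s P*_{y,w} ∈ ℤ[Γ₋]` -/
  M_cond : ∀ s ∈ Sset n, ∀ y w, len n (s * y) < len n y → len n w < len n (s * w) →
    bruhat n y w → y ≠ w →
    inNeg ((M s w) y + (M s w).sum (fun z m => if z = y then 0 else C z y * m)
      - vgen s * C w y)
  /-- `C_s C_w = C_{sw} + Σ_{z<w, sz<z} M^s_{z,w} C_z` when `sw > w` -/
  mulC_up : ∀ s ∈ Sset n, ∀ w ∈ Wset n, len n w < len n (s * w) →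
    mul (C s) (C w) = C (s * w) + (M s w).sum (fun z m => m • C z)
  /-- `C_s C_w = (v_s + v_s⁻¹) C_w` when `sw < w` -/
  mulC_down : ∀ s ∈ Sset n, ∀ w ∈ Wset n, len n (s * w) < len n w →
    mul (C s) (C w) = (vgen s + vgenInv s) • C w

/-- `P_{y,w} = v_y⁻¹ v_w P*_{y,w}` -/
def Ppoly (n : ℕ) (D : KLData n) (y w : P) : RR :=
  mono ((tlen n w : ℤ) - (tlen n y : ℤ),
        ((len n w : ℤ) - (tlen n w : ℤ)) - ((len n y : ℤ) - (tlen n y : ℤ))) * D.C w y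

/-- the `R`-polynomials : `bar T_w = Σ_y R_{y,w} T_y` -/
def Rpoly {n : ℕ} (D : KLData n) (y w : P) : RR := (D.bar (TT w)) y

/-- `y ≤_{L,s} w` : `C_y` occurs with non-zero coefficient in `C_s C_w`
(expressed in the `C`-basis), for some `s ∈ S_n`, `y ≠ w` -/
def leLelem {n : ℕ} (D : KLData n) (y w : P) : Prop :=
  ∃ s ∈ Sset n, len n w < len n (s * w) ∧ (y = s * w ∨ (D.M s w) y ≠ 0)

/-- the preorder `≤_L` -/
def leL {n : ℕ} (D : KLData n) : P → P → Prop := Relation.ReflTransGen (leLelem D)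

/-- the equivalence `∼_L`; its classes are the left cells -/
def simL {n : ℕ} (D : KLData n) (y w : P) : Prop := leL D y w ∧ leL D w y

/-- `f` is a polynomial in `q = v²` -/
def isPolyInQ (f : RR) : Prop := ∀ g ∈ f.coeff.support, g.1 = 0 ∧ 0 ≤ g.2 ∧ 2 ∣ g.2

end

/-!
An element `w` of `W_n` lies in `X_n^{(l)}·𝔖_{l,n-l}` iff `ℓ_t(w) = l` and `w(j) > 0` for all
`l < j ≤ n`: the elements of `X_n` are those increasing on `[1, n]`, and `𝔖_{l,n-l}` preserves
`(l, n]`. The number of negative values on `(k, n]` is, for each `k`, monotone for the Bruhat order,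
since along a reduced word every letter `g` creates a descent, and at a descent the count is the
largest one compatible with the counts that `g` leaves unchanged. Hence, if `y` has no negative
value on `(l, n]`, neither has any `x ≤ y`.
-/

section

open scoped Pointwise

variable {n i k l : ℕ} {w z g : P}

theorem tgen_apply (j : ℤ) : tgen j = if j = 1 then -1 else if j = -1 then 1 else j :=
  Equiv.swap_apply_def 1 (-1) j

theorem sgen_apply (hi : 1 ≤ i) (j : ℤ) : sgen i j =
    if j = i then (i : ℤ) + 1 else if j = i + 1 then (i : ℤ) else
    if j = -i then -((i : ℤ) + 1) else if j = -((i : ℤ) + 1) then -(i : ℤ) else j := by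
  simp only [sgen, Equiv.Perm.mul_apply, Equiv.swap_apply_def]
  split_ifs <;> omega

theorem sgen_apply_self (hi : 1 ≤ i) : sgen i i = i + 1 := by
  simp [sgen_apply hi]

theorem sgen_apply_add_one (hi : 1 ≤ i) : sgen i (i + 1) = i := by
  simp [sgen_apply hi]

theorem sgen_ne_tgen (hi : 1 ≤ i) : sgen i ≠ tgen := by
  intro h
  have := congrArg (fun f : P => f (i + 1)) h
  simp only [sgen_apply_add_one hi, tgen_apply] at this
  split_ifs at this <;> omega

theorem mul_self_of_mem_Sset (hg : g ∈ Sset n) : g * g = 1 := by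
  rcases hg with rfl | ⟨i, ⟨hi, -⟩, rfl⟩
  · exact Equiv.swap_mul_self 1 (-1)
  · ext j
    simp only [Equiv.Perm.mul_apply, sgen_apply hi, Equiv.Perm.one_apply]
    split_ifs <;> omega

theorem tgen_mem_Wset (hn : 1 ≤ n) : tgen ∈ Wset n := by
  refine ⟨fun j => ?_, fun j hj => ?_⟩ <;> simp only [tgen_apply] <;> grind

theorem sgen_mem_Wset (hi : i ∈ Set.Icc 1 (n - 1)) : sgen i ∈ Wset n := by
  obtain ⟨hi, hin⟩ := hi
  refine ⟨fun j => ?_, fun j hj => ?_⟩ <;> simp only [sgen_apply hi] <;> grind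

/-- `W_n` as a subgroup of the permutations of `ℤ`. -/
def signedPerm (n : ℕ) : Subgroup P where
  carrier := Wset n
  one_mem' := ⟨fun _ => rfl, fun _ _ => rfl⟩
  mul_mem' {v w} hv hw :=
    ⟨fun i => by simp only [Equiv.Perm.mul_apply, hw.1, hv.1],
      fun i hi => by simp only [Equiv.Perm.mul_apply, hw.2 i hi, hv.2 i hi]⟩
  inv_mem' {w} hw :=
    ⟨fun i => by rw [Equiv.Perm.inv_eq_iff_eq, hw.1, Equiv.Perm.coe_inv, Equiv.apply_symm_apply],
      fun i hi => by rw [Equiv.Perm.inv_eq_iff_eq, hw.2 i hi]⟩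

theorem closure_Sset_le_signedPerm (hn : 1 ≤ n) : Subgroup.closure (Sset n) ≤ signedPerm n := by
  rw [Subgroup.closure_le]
  rintro _ (rfl | ⟨i, hi, rfl⟩)
  exacts [tgen_mem_Wset hn, sgen_mem_Wset hi]

theorem list_prod_mem_closure_Sset {L : List P} (hL : ∀ g ∈ L, g ∈ Sset n) :
    L.prod ∈ Subgroup.closure (Sset n) :=
  Subgroup.list_prod_mem _ fun g hg => Subgroup.subset_closure (hL g hg)

theorem SymN_le_signedPerm : SymN n ≤ signedPerm n := by
  rw [SymN, Subgroup.closure_le]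
  rintro _ ⟨i, hi, rfl⟩
  exact sgen_mem_Wset hi

theorem SymN_le_closure_Sset : SymN n ≤ Subgroup.closure (Sset n) :=
  Subgroup.closure_mono (Set.subset_insert _ _)

theorem SymLR_le_SymN : SymLR n l ≤ SymN n :=
  Subgroup.closure_mono (Set.image_mono fun _ h => ⟨h.1, h.2.1⟩)

theorem sgen_mem_SymN (hi : i ∈ Set.Icc 1 (n - 1)) : sgen i ∈ SymN n :=
  Subgroup.subset_closure (Set.mem_image_of_mem _ hi)

theorem sgen_mem_SymLR (hi : i ∈ Set.Icc 1 (n - 1)) (hil : i ≠ l) : sgen i ∈ SymLR n l :=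
  Subgroup.subset_closure (Set.mem_image_of_mem _ ⟨hi.1, hi.2, hil⟩)

theorem apply_ne_zero_of_odd (hw : Function.Odd w) {a : ℤ} (ha : a ≠ 0) : w a ≠ 0 := by
  rw [← hw.map_zero]
  exact w.injective.ne ha

/-! ### Reflections and the strong exchange property -/

/-- The reflection of `W_n` that exchanges `a` with `b` and `-a` with `-b`. When `b = -a` the two
transpositions coincide and only one of them is taken. -/
def signedSwap (a b : ℤ) : P :=
  if a = -b then Equiv.swap a b else Equiv.swap a b * Equiv.swap (-a) (-b)

theorem tgen_eq_signedSwap : tgen = signedSwap (-1) 1 :=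
  Equiv.swap_comm _ _

theorem sgen_eq_signedSwap : sgen i = signedSwap i (i + 1) := by
  rw [signedSwap, if_neg (by omega), sgen]

theorem sgen_eq_signedSwap_neg (hi : 1 ≤ i) : sgen i = signedSwap (-((i : ℤ) + 1)) (-i) := by
  rw [signedSwap, if_neg (by omega), sgen, neg_neg, neg_neg]
  ext j
  simp only [Equiv.Perm.mul_apply, Equiv.swap_apply_def]
  split_ifs <;> omega

theorem mul_signedSwap (hw : Function.Odd w) (a b : ℤ) :
    w * signedSwap a b = signedSwap (w a) (w b) * w := by
  have hab : w a = -w b ↔ a = -b := by rw [← hw, w.injective.eq_iff]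
  unfold signedSwap
  by_cases h : a = -b
  · rw [if_pos h, if_pos (hab.2 h), Equiv.mul_swap_eq_swap_mul]
  · rw [if_neg h, if_neg (mt hab.1 h), ← hw, ← hw, ← mul_assoc,
      Equiv.mul_swap_eq_swap_mul w a b, mul_assoc, Equiv.mul_swap_eq_swap_mul w, mul_assoc]

theorem eq_signedSwap_of_mem_Sset {u v : ℤ} (hg : g ∈ Sset n) (hu : u ≠ 0) (hv : v ≠ 0)
    (huv : u < v) (hguv : g v < g u) : g = signedSwap u v := by
  rcases hg with rfl | ⟨i, ⟨hi, -⟩, rfl⟩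
  · obtain ⟨rfl, rfl⟩ : u = -1 ∧ v = 1 := by
      simp only [tgen_apply] at hguv
      split_ifs at hguv <;> omega
    exact tgen_eq_signedSwap
  · have huv_eq : u = i ∧ v = i + 1 ∨ u = -(i + 1) ∧ v = -i := by
      simp only [sgen_apply hi] at hguv
      split_ifs at hguv <;> omega
    rcases huv_eq with ⟨rfl, rfl⟩ | ⟨rfl, rfl⟩
    · exact sgen_eq_signedSwap
    · exact sgen_eq_signedSwap_neg hi

theorem exists_sublist_prod_eq_mul_signedSwap (hn : 1 ≤ n) {a b : ℤ} (ha : a ≠ 0) (hb : b ≠ 0)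
    (hab : a < b) {L : List P} (hL : ∀ g ∈ L, g ∈ Sset n) (h : L.prod b < L.prod a) :
    ∃ L' : List P, L'.Sublist L ∧ L'.length + 1 = L.length ∧
      L'.prod = L.prod * signedSwap a b := by
  induction L with
  | nil => exact absurd h hab.not_gt
  | cons g L ih =>
    rw [List.forall_mem_cons] at hL
    obtain ⟨hg, hL⟩ := hL
    have hodd : Function.Odd L.prod :=
      (closure_Sset_le_signedPerm hn (list_prod_mem_closure_Sset hL)).1
    rcases (L.prod.injective.ne hab.ne).lt_or_gt with hlt | hgt
    · refine ⟨L, L.sublist_cons_self g, rfl, ?_⟩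
      have hg_eq : g = signedSwap (L.prod a) (L.prod b) :=
        eq_signedSwap_of_mem_Sset hg (apply_ne_zero_of_odd hodd ha)
          (apply_ne_zero_of_odd hodd hb) hlt h
      rw [List.prod_cons, mul_assoc, mul_signedSwap hodd, ← hg_eq, ← mul_assoc,
        mul_self_of_mem_Sset hg, one_mul]
    · obtain ⟨L', hsub, hlen, hprod⟩ := ih hL hgt
      exact ⟨g :: L', hsub.cons_cons g, by simp [hlen], by simp [hprod, mul_assoc]⟩

/-! ### Reduced words -/

/-- `L` is a reduced expression, in the generators `S_n`, of its product. -/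
def IsReducedWord (n : ℕ) (L : List P) : Prop :=
  (∀ g ∈ L, g ∈ Sset n) ∧ L.length = len n L.prod

theorem len_prod_le {L : List P} (hL : ∀ g ∈ L, g ∈ Sset n) : len n L.prod ≤ L.length :=
  Nat.sInf_le ⟨L, hL, rfl, rfl⟩

theorem exists_isReducedWord (hw : w ∈ Subgroup.closure (Sset n)) :
    ∃ L, IsReducedWord n L ∧ L.prod = w := by
  have hinv : (Sset n)⁻¹ ⊆ Sset n := fun g hg => by
    rwa [← inv_inv g, inv_eq_of_mul_eq_one_left (mul_self_of_mem_Sset hg)]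
  rw [← Subgroup.mem_toSubmonoid, Subgroup.closure_toSubmonoid,
    Set.union_eq_self_of_subset_right hinv] at hw
  obtain ⟨L, hL, hLw⟩ := Submonoid.exists_list_of_mem_closure hw
  obtain ⟨M, hM, rfl, hlen⟩ := Nat.sInf_mem (s := {k | ∃ M : List P, (∀ g ∈ M, g ∈ Sset n) ∧
    M.prod = w ∧ M.length = k}) ⟨_, L, hL, hLw, rfl⟩
  exact ⟨M, ⟨hM, hlen⟩, rfl⟩

theorem IsReducedWord.of_append_singleton {L : List P} (h : IsReducedWord n (L ++ [g])) :
    IsReducedWord n L := by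
  have hL : ∀ g ∈ L, g ∈ Sset n := fun g hg => h.1 g (List.mem_append_left _ hg)
  refine ⟨hL, (len_prod_le hL).antisymm' ?_⟩
  obtain ⟨M, hM, hML⟩ := exists_isReducedWord (list_prod_mem_closure_Sset hL)
  have hle : len n (M ++ [g]).prod ≤ (M ++ [g]).length := len_prod_le <| by
    simpa [or_imp, forall_and] using ⟨hM.1, h.1 g (by simp)⟩
  have hlen := h.2
  simp only [List.prod_append, hML, List.length_append, hM.2] at hle hlen
  omega

theorem lt_of_len_le_len_mul_signedSwap (hn : 1 ≤ n) (hw : w ∈ Subgroup.closure (Sset n))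
    {a b : ℤ} (ha : a ≠ 0) (hb : b ≠ 0) (hab : a < b) (h : len n w ≤ len n (w * signedSwap a b)) :
    w a < w b := by
  obtain ⟨L, hL, rfl⟩ := exists_isReducedWord hw
  refine (L.prod.injective.ne hab.ne).lt_of_le (not_lt.1 fun hba => ?_)
  obtain ⟨L', hsub, hlen, hprod⟩ :=
    exists_sublist_prod_eq_mul_signedSwap hn ha hb hab hL.1 hba
  have hle := len_prod_le fun g hg => hL.1 g (hsub.subset hg)
  rw [hprod] at hle
  have := hL.2
  omega

theorem apply_lt_apply_add_one_of_len_le (hn : 1 ≤ n) (hw : w ∈ Subgroup.closure (Sset n))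
    (hi : 1 ≤ i) (h : len n w ≤ len n (w * sgen i)) : w i < w (i + 1) :=
  lt_of_len_le_len_mul_signedSwap hn hw (by omega) (by omega) (by omega)
    (sgen_eq_signedSwap ▸ h)

theorem apply_one_pos_of_len_le (hn : 1 ≤ n) (hw : w ∈ Subgroup.closure (Sset n))
    (h : len n w ≤ len n (w * tgen)) : 0 < w 1 := by
  have hlt : w (-1) < w 1 := lt_of_len_le_len_mul_signedSwap hn hw (by decide) (by decide)
    (by decide) (tgen_eq_signedSwap ▸ h)
  rw [(closure_Sset_le_signedPerm hn hw).1] at hlt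
  omega

theorem IsReducedWord.len_lt_len_mul {L : List P} (h : IsReducedWord n (L ++ [g])) :
    len n L.prod < len n (L.prod * g) := by
  have hL := h.of_append_singleton.2
  have hLg := h.2
  simp only [List.length_append, List.prod_append, List.length_singleton,
    List.prod_singleton] at hLg
  omega

/-! ### Counting negative values -/

/-- The number of positions `j` with `k < j ≤ n` at which `w` takes a negative value. -/
noncomputable def negCount (n k : ℕ) (w : P) : ℕ := ((Finset.Ioc (k : ℤ) n).filter (w · < 0)).card

theorem tgen_mem_stabilizer_Ioc (hk : 1 ≤ k) :
    tgen ∈ MulAction.stabilizer P (Set.Ioc (k : ℤ) n) := by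
  simp only [MulAction.mem_stabilizer_set, Equiv.Perm.smul_def, Set.mem_Ioc, tgen_apply]
  grind

theorem sgen_mem_stabilizer_Ioc (hi : i ∈ Set.Icc 1 (n - 1)) (hk : k ≠ i) :
    sgen i ∈ MulAction.stabilizer P (Set.Ioc (k : ℤ) n) := by
  obtain ⟨hi, hin⟩ := hi
  simp only [MulAction.mem_stabilizer_set, Equiv.Perm.smul_def, Set.mem_Ioc, sgen_apply hi]
  grind

theorem SymN_le_stabilizer_Ioc : SymN n ≤ MulAction.stabilizer P (Set.Ioc ((0 : ℕ) : ℤ) n) := by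
  rw [SymN, Subgroup.closure_le]
  rintro _ ⟨i, hi, rfl⟩
  exact sgen_mem_stabilizer_Ioc hi (by grind)

theorem SymLR_le_stabilizer_Ioc : SymLR n l ≤ MulAction.stabilizer P (Set.Ioc (l : ℤ) n) := by
  rw [SymLR, Subgroup.closure_le]
  rintro _ ⟨i, ⟨hi, hin, hil⟩, rfl⟩
  exact sgen_mem_stabilizer_Ioc ⟨hi, hin⟩ hil.symm

theorem negCount_mul (hg : g ∈ MulAction.stabilizer P (Set.Ioc (k : ℤ) n)) :
    negCount n k (w * g) = negCount n k w := by
  rw [MulAction.mem_stabilizer_set] at hg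
  refine Finset.card_equiv g fun j => ?_
  have := hg j
  simp only [Set.mem_Ioc, Equiv.Perm.smul_def] at this
  rw [Finset.mem_filter, Finset.mem_filter, Finset.mem_Ioc, Finset.mem_Ioc, this,
    Equiv.Perm.mul_apply]

theorem negCount_eq_zero_iff : negCount n k w = 0 ↔ ∀ j ∈ Set.Ioc (k : ℤ) n, 0 ≤ w j := by
  simp [negCount, Finset.filter_eq_empty_iff]

theorem negCount_eq_ite_add (hk : k < n) :
    negCount n k w = (if w (k + 1) < 0 then 1 else 0) + negCount n (k + 1) w := by
  have hIoc : Finset.Ioc (k : ℤ) n = insert ((k : ℤ) + 1) (Finset.Ioc ((k + 1 : ℕ) : ℤ) n) := by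
    ext j
    simp only [Finset.mem_Ioc, Finset.mem_insert]
    omega
  unfold negCount
  rw [hIoc, Finset.filter_insert]
  split_ifs
  · rw [Finset.card_insert_of_notMem (by simp), add_comm]
  · rw [zero_add]

theorem negCount_le_of_tgen_descent (hn : 1 ≤ n) (hz : z 1 < 0)
    (h : ∀ k, 1 ≤ k → negCount n k w ≤ negCount n k z) (k : ℕ) :
    negCount n k w ≤ negCount n k z := by
  rcases Nat.eq_zero_or_pos k with rfl | hk
  · have h₁ := h 1 le_rfl
    rw [negCount_eq_ite_add hn, negCount_eq_ite_add hn]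
    simp only [Nat.cast_zero, zero_add, if_pos hz]
    split_ifs <;> omega
  · exact h k hk

theorem negCount_le_of_sgen_descent (hi : i ∈ Set.Icc 1 (n - 1)) (hz : z (i + 1) < z i)
    (h : ∀ k, k ≠ i → negCount n k w ≤ negCount n k z) (k : ℕ) :
    negCount n k w ≤ negCount n k z := by
  obtain ⟨hi, hin⟩ := hi
  rcases eq_or_ne k i with rfl | hk
  · obtain ⟨m, rfl⟩ := Nat.exists_eq_add_of_le' hi
    have hprev := h m (by omega)
    have hnext := h (m + 1 + 1) (by omega)
    rw [negCount_eq_ite_add (by omega : m < n), negCount_eq_ite_add (by omega : m < n)] at hprev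
    rw [negCount_eq_ite_add (by omega : m + 1 < n),
      negCount_eq_ite_add (by omega : m + 1 < n)] at hprev ⊢
    push_cast at *
    split_ifs at * <;> omega
  · exact h k hk

theorem negCount_le_of_sublist (hn : 1 ≤ n) {L L' : List P} (hL : IsReducedWord n L)
    (hsub : L'.Sublist L) (k : ℕ) : negCount n k L'.prod ≤ negCount n k L.prod := by
  induction L using List.reverseRecOn generalizing L' k with
  | nil => rw [List.sublist_nil.1 hsub]
  | append_singleton L g ih =>
    have hw := list_prod_mem_closure_Sset hL.of_append_singleton.1
    obtain ⟨L₁, L₂, rfl, hL₁, hL₂⟩ := List.sublist_append_iff.1 hsub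
    have hstable (k : ℕ) (hg : g ∈ MulAction.stabilizer P (Set.Ioc (k : ℤ) n)) :
        negCount n k (L₁ ++ L₂).prod ≤ negCount n k (L ++ [g]).prod := by
      have hL₂g : L₂.prod ∈ MulAction.stabilizer P (Set.Ioc (k : ℤ) n) :=
        Subgroup.list_prod_mem _ fun a ha => List.mem_singleton.1 (hL₂.subset ha) ▸ hg
      rw [List.prod_append, List.prod_append, List.prod_singleton, negCount_mul hL₂g,
        negCount_mul hg]
      exact ih hL.of_append_singleton hL₁ k
    rcases hL.1 g (by simp) with rfl | ⟨i, hi, rfl⟩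
    · refine negCount_le_of_tgen_descent hn ?_
        (fun k hk => hstable k (tgen_mem_stabilizer_Ioc hk)) k
      have := apply_one_pos_of_len_le hn hw hL.len_lt_len_mul.le
      have hodd := (closure_Sset_le_signedPerm hn hw).1 1
      simpa [tgen_apply, hodd] using this
    · refine negCount_le_of_sgen_descent hi ?_
        (fun k hk => hstable k (sgen_mem_stabilizer_Ioc hi hk)) k
      have := apply_lt_apply_add_one_of_len_le hn hw hi.1 hL.len_lt_len_mul.le
      simpa [sgen_apply_self hi.1, sgen_apply_add_one hi.1] using this

theorem tcount_eq_negCount (hn : 1 ≤ n) {L : List P} (hL : IsReducedWord n L) :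
    tcount L = negCount n 0 L.prod := by
  induction L using List.reverseRecOn with
  | nil =>
    refine (negCount_eq_zero_iff.2 fun j hj => ?_).symm
    exact (show (0 : ℤ) < j by exact_mod_cast hj.1).le
  | append_singleton L g ih =>
    have hw := list_prod_mem_closure_Sset hL.of_append_singleton.1
    have htcount : tcount (L ++ [g]) = tcount L + if g = tgen then 1 else 0 := by simp [tcount]
    rw [htcount, ih hL.of_append_singleton, List.prod_append, List.prod_singleton]
    rcases hL.1 g (by simp) with rfl | ⟨i, hi, rfl⟩
    · have hpos := apply_one_pos_of_len_le hn hw hL.len_lt_len_mul.le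
      have hodd := (closure_Sset_le_signedPerm hn hw).1 1
      rw [negCount_eq_ite_add hn, negCount_eq_ite_add hn,
        negCount_mul (tgen_mem_stabilizer_Ioc le_rfl)]
      simp [tgen_apply, hodd, hpos, hpos.le, add_comm]
    · rw [if_neg (sgen_ne_tgen hi.1), add_zero,
        negCount_mul (sgen_mem_stabilizer_Ioc hi (by grind))]

theorem tlen_eq_negCount (hn : 1 ≤ n) (hw : w ∈ Subgroup.closure (Sset n)) :
    tlen n w = negCount n 0 w := by
  obtain ⟨L, hL, rfl⟩ := exists_isReducedWord hw
  have hcounts : {k | ∃ M : List P, (∀ g ∈ M, g ∈ Sset n) ∧ M.prod = L.prod ∧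
      M.length = len n L.prod ∧ tcount M = k} = {negCount n 0 L.prod} := by
    refine Set.eq_singleton_iff_unique_mem.2
      ⟨⟨L, hL.1, rfl, hL.2, tcount_eq_negCount hn hL⟩, ?_⟩
    rintro _ ⟨M, hM, hprod, hlen, rfl⟩
    rw [← hprod] at hlen ⊢
    exact tcount_eq_negCount hn ⟨hM, hlen⟩
  rw [tlen, hcounts, csInf_singleton]

/-! ### Minimal coset representatives -/

theorem strictMonoOn_Ioc (h : ∀ i ∈ Set.Icc 1 (n - 1), w (i : ℕ) < w (i + 1)) :
    StrictMonoOn w (Set.Ioc 0 (n : ℤ)) := by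
  refine strictMonoOn_of_lt_add_one Set.ordConnected_Ioc fun a _ ha ha' => ?_
  simp only [Set.mem_Ioc] at ha ha'
  lift a to ℕ using ha.1.le
  exact h a ⟨by omega, by omega⟩

theorem apply_eq_self_of_strictMonoOn {α : Type*} [LinearOrder α] {s : Set α} [Finite s]
    {σ : Equiv.Perm α} (hσ : σ ∈ MulAction.stabilizer (Equiv.Perm α) s) (h : StrictMonoOn σ s)
    {a : α} (ha : a ∈ s) : σ a = a := by
  have hmaps : Set.MapsTo σ s s := fun b => (MulAction.mem_stabilizer_set.1 hσ b).2
  have hmono : StrictMono (hmaps.restrict σ s s) := fun b c hbc => h b.2 c.2 hbc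
  exact congrArg Subtype.val (hmono.apply_eq (x := ⟨a, ha⟩))

theorem eq_one_of_mem_Wset (hw : w ∈ Wset n) (h : ∀ j ∈ Set.Ioc 0 (n : ℤ), w j = j) : w = 1 := by
  ext j
  rw [Equiv.Perm.one_apply]
  rcases lt_or_ge (n : ℤ) |j| with hj | hj
  · exact hw.2 j hj
  rcases lt_trichotomy j 0 with hneg | rfl | hpos
  · have := h (-j) ⟨by omega, (neg_le_abs j).trans hj⟩
    rwa [hw.1, neg_inj] at this
  · exact Function.Odd.map_zero hw.1
  · exact h j ⟨hpos, (le_abs_self j).trans hj⟩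

theorem strictMonoOn_of_forall_len_le (hn : 1 ≤ n) (hw : w ∈ Subgroup.closure (Sset n))
    (h : ∀ u ∈ SymN n, len n w ≤ len n (w * u)) : StrictMonoOn w (Set.Ioc 0 (n : ℤ)) :=
  strictMonoOn_Ioc fun _ hi => apply_lt_apply_add_one_of_len_le hn hw hi.1 (h _ (sgen_mem_SymN hi))

theorem exists_forall_len_mul_le (n : ℕ) (H : Subgroup P) (w : P) :
    ∃ u ∈ H, ∀ v ∈ H, len n (w * u) ≤ len n (w * u * v) := by
  obtain ⟨u, hu, hmin⟩ :=
    exists_minimalFor_of_wellFoundedLT (· ∈ H) (fun u => len n (w * u)) ⟨1, H.one_mem⟩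
  refine ⟨u, hu, fun v hv => ?_⟩
  rw [mul_assoc]
  exact (le_total _ _).elim id (hmin (H.mul_mem hu hv))

theorem mem_Xset_of_strictMonoOn (hn : 1 ≤ n) (hw : w ∈ Subgroup.closure (Sset n))
    (h : StrictMonoOn w (Set.Ioc 0 (n : ℤ))) : w ∈ Xset n := by
  obtain ⟨u, hu, hmin⟩ := exists_forall_len_mul_le n (SymN n) w
  have hwu : StrictMonoOn (w * u) (Set.Ioc 0 (n : ℤ)) :=
    strictMonoOn_of_forall_len_le hn (mul_mem hw (SymN_le_closure_Sset hu)) hmin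
  have hstab := SymN_le_stabilizer_Ioc hu
  have hmem {j : ℤ} (hj : j ∈ Set.Ioc 0 (n : ℤ)) : u j ∈ Set.Ioc 0 (n : ℤ) :=
    (MulAction.mem_stabilizer_set.1 hstab j).2 hj
  have hu_mono : StrictMonoOn u (Set.Ioc 0 (n : ℤ)) := fun a ha b hb hab =>
    (h.lt_iff_lt (hmem ha) (hmem hb)).1 (hwu ha hb hab)
  have hu_one : u = 1 := eq_one_of_mem_Wset (SymN_le_signedPerm hu) fun j hj =>
    apply_eq_self_of_strictMonoOn hstab hu_mono hj
  rw [hu_one, mul_one] at hmin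
  exact ⟨closure_Sset_le_signedPerm hn hw, hmin⟩

/-! ### Characterization of `X_n^{(l)}·𝔖_{l,n-l}` -/

theorem negCount_eq_zero_of_strictMonoOn (h : StrictMonoOn w (Set.Ioc 0 (n : ℤ))) :
    negCount n (negCount n 0 w) w = 0 := by
  refine negCount_eq_zero_iff.2 fun j hj => not_lt.1 fun hneg => hj.1.not_ge ?_
  have hj_pos : 0 < j := (Int.natCast_nonneg _).trans_lt hj.1
  have hsub : Finset.Ioc 0 j ⊆ (Finset.Ioc ((0 : ℕ) : ℤ) n).filter (w · < 0) := fun a ha => by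
    obtain ⟨ha_pos, haj⟩ := Finset.mem_Ioc.1 ha
    refine Finset.mem_filter.2 ⟨Finset.mem_Ioc.2 ⟨ha_pos, haj.trans hj.2⟩, ?_⟩
    exact (h.monotoneOn ⟨ha_pos, haj.trans hj.2⟩ ⟨hj_pos, hj.2⟩ haj).trans_lt hneg
  have hcard : (Finset.Ioc 0 j).card ≤ negCount n 0 w := Finset.card_le_card hsub
  rw [Int.card_Ioc] at hcard
  omega

theorem apply_neg_of_negCount_eq (hl : negCount n 0 w = l) (h : negCount n l w = 0) {j : ℤ}
    (hj : j ∈ Set.Ioc 0 (l : ℤ)) : w j < 0 := by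
  have hsub : (Finset.Ioc ((0 : ℕ) : ℤ) n).filter (w · < 0) ⊆ Finset.Ioc 0 (l : ℤ) := fun a ha => by
    obtain ⟨ha, hneg⟩ := Finset.mem_filter.1 ha
    obtain ⟨ha_pos, han⟩ := Finset.mem_Ioc.1 ha
    refine Finset.mem_Ioc.2 ⟨ha_pos, not_lt.1 fun hla => ?_⟩
    exact hneg.not_ge (negCount_eq_zero_iff.1 h a ⟨hla, han⟩)
  have heq := Finset.eq_of_subset_of_card_le hsub <| by
    simpa [negCount] using hl.ge
  have hmem := Finset.mem_Ioc.2 hj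
  rw [← heq] at hmem
  exact (Finset.mem_filter.1 hmem).2

theorem negCount_of_mem_XSset (hn : 1 ≤ n) (hw : w ∈ Subgroup.closure (Sset n))
    (h : w ∈ XSset n l) : negCount n 0 w = l ∧ negCount n l w = 0 := by
  obtain ⟨a, ⟨⟨-, hmin⟩, hal⟩, u, hu, rfl⟩ := h
  have huN : u ∈ SymN n := SymLR_le_SymN hu
  have ha : a ∈ Subgroup.closure (Sset n) :=
    (Subgroup.mul_mem_cancel_right _ (SymN_le_closure_Sset huN)).1 hw
  rw [tlen_eq_negCount hn ha] at hal
  have hzero := negCount_eq_zero_of_strictMonoOn (strictMonoOn_of_forall_len_le hn ha hmin)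
  rw [hal] at hzero
  exact ⟨(negCount_mul (SymN_le_stabilizer_Ioc huN)).trans hal,
    (negCount_mul (SymLR_le_stabilizer_Ioc hu)).trans hzero⟩

theorem mem_XSset_of_negCount (hn : 1 ≤ n) (hw : w ∈ Subgroup.closure (Sset n))
    (hl : negCount n 0 w = l) (h : negCount n l w = 0) : w ∈ XSset n l := by
  obtain ⟨u, hu, hmin⟩ := exists_forall_len_mul_le n (SymLR n l) w
  have huN : u ∈ SymN n := SymLR_le_SymN hu
  have hwu : w * u ∈ Subgroup.closure (Sset n) := mul_mem hw (SymN_le_closure_Sset huN)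
  rw [← negCount_mul (SymN_le_stabilizer_Ioc huN)] at hl
  rw [← negCount_mul (SymLR_le_stabilizer_Ioc hu)] at h
  have hmono : StrictMonoOn (w * u) (Set.Ioc 0 (n : ℤ)) := strictMonoOn_Ioc fun i hi => by
    rcases eq_or_ne i l with rfl | hil
    · have hneg : (w * u) i < 0 := apply_neg_of_negCount_eq hl h ⟨mod_cast hi.1, le_rfl⟩
      exact hneg.trans_le (negCount_eq_zero_iff.1 h _ ⟨lt_add_one _, by grind⟩)
    · exact apply_lt_apply_add_one_of_len_le hn hwu hi.1 (hmin _ (sgen_mem_SymLR hi hil))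
  exact ⟨w * u, ⟨mem_Xset_of_strictMonoOn hn hwu hmono, (tlen_eq_negCount hn hwu).trans hl⟩,
    u⁻¹, inv_mem hu, mul_inv_cancel_right w u⟩

theorem mem_XSset_iff (hn : 1 ≤ n) (hw : w ∈ Subgroup.closure (Sset n)) :
    w ∈ XSset n l ↔ negCount n 0 w = l ∧ negCount n l w = 0 :=
  ⟨negCount_of_mem_XSset hn hw, fun h => mem_XSset_of_negCount hn hw h.1 h.2⟩

end

/-- If `x ≤ y` (Bruhat), `ℓ_t(x) = ℓ_t(y) = l` and
`y ∈ X_n^{(l)}·𝔖_{l,n-l}`, then `x ∈ X_n^{(l)}·𝔖_{l,n-l}`. -/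
theorem XS_bruhat_closed (n l : ℕ) (hn : 1 ≤ n) (hl : l ≤ n) (x y : P)
    (hx : x ∈ Wset n) (hy : y ∈ Wset n) (hxy : bruhat n x y)
    (htx : tlen n x = l) (hty : tlen n y = l) (hyXS : y ∈ XSset n l) :
    x ∈ XSset n l := by
  obtain ⟨L, L', hL, rfl, hlen, hsub, rfl⟩ := hxy
  have hword : IsReducedWord n L := ⟨hL, hlen⟩
  have hx_mem := list_prod_mem_closure_Sset fun g hg => hL g (hsub.subset hg)
  rw [mem_XSset_iff hn (list_prod_mem_closure_Sset hL)] at hyXS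
  have hle : negCount n l L'.prod ≤ negCount n l L.prod := negCount_le_of_sublist hn hword hsub l
  rw [mem_XSset_iff hn hx_mem, ← tlen_eq_negCount hn hx_mem]
  exact ⟨htx, Nat.eq_zero_of_le_zero (hyXS.2 ▸ hle)⟩
end

section
/- Let x, y ∈ W_n with ℓ_t(x) = ℓ_t(y) = l and x ≤ y in the Bruhat order. Then a_x ≤ a_y and b_x ≤ b_y. -/
open scoped Classical

/-!
To `w ∈ W_n` attach the set `Neg(w) = {a ∈ [1, n] : w(a) < 0}`, and compare subsets of `[1, n]` in
the Gale order: `S ≤ T` when `|S ∩ [j, n]| ≤ |T ∩ [j, n]|` for all `j`.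

* `w ↦ Neg(w)` is monotone from the Bruhat order to the Gale order, by the lifting property applied
  to one letter of a reduced expression at a time.
* If `w = a a_l σ b⁻¹`, then only `a_l` changes signs and it does so exactly on `[1, l]`, a block
  that `σ` preserves. Hence `Neg(w) = b([1, l])`, and likewise `Neg(w⁻¹) = a([1, l])`.
* An element `b ∈ Y_{l,n-l}` is a Grassmannian permutation, so it is determined by `b([1, l])`, and
  the Gale order on these sets implies the Bruhat order on the permutations: strip left descents
  `s_i` of the larger element, and of the smaller one whenever `s_i` is a descent of it too.
-/

namespace Hyperoctahedral

/-! ### The generators -/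

lemma tgen_apply (a : ℤ) : tgen a = if a = 1 then -1 else if a = -1 then 1 else a :=
  Equiv.swap_apply_def ..

lemma sgen_apply {i : ℕ} (hi : 1 ≤ i) (a : ℤ) :
    sgen i a = if a = i then (i : ℤ) + 1 else if a = i + 1 then (i : ℤ) else
      if a = -i then -((i : ℤ) + 1) else if a = -(i + 1) then -(i : ℤ) else a := by
  simp only [sgen, Equiv.Perm.mul_apply, Equiv.swap_apply_def]
  split_ifs <;> omega

lemma sgen_apply_self {i : ℕ} (hi : 1 ≤ i) : sgen i i = i + 1 := by
  simp [sgen_apply hi]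

lemma sgen_apply_add_one {i : ℕ} (hi : 1 ≤ i) : sgen i (i + 1) = i := by
  simp [sgen_apply hi]

lemma sgen_apply_le_iff {i : ℕ} (hi : 1 ≤ i) {k : ℤ} (hk : k ≠ i) (hk' : k ≠ -(i + 1)) (a : ℤ) :
    sgen i a ≤ k ↔ a ≤ k := by
  rw [sgen_apply hi]
  split_ifs <;> omega

lemma sgen_apply_lt_sgen_apply {i : ℕ} (hi : 1 ≤ i) {a b : ℤ} (ha : 0 < a) (hab : a < b)
    (h : a = i → b ≠ i + 1) : sgen i a < sgen i b := by
  simp only [sgen_apply hi]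
  split_ifs <;> omega

lemma mem_Sset_iff {n : ℕ} {g : P} :
    g ∈ Sset n ↔ g = tgen ∨ ∃ i : ℕ, 1 ≤ i ∧ i + 1 ≤ n ∧ g = sgen i := by
  refine or_congr_right (exists_congr fun i ↦ ?_)
  rw [Set.mem_Icc, and_assoc, eq_comm]
  refine and_congr_right fun hi ↦ and_congr_left fun _ ↦ ?_
  omega

lemma sgen_mem_Sset {n i : ℕ} (hi : 1 ≤ i) (hin : i + 1 ≤ n) : sgen i ∈ Sset n :=
  mem_Sset_iff.2 (Or.inr ⟨i, hi, hin, rfl⟩)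

lemma mul_self_of_mem_Sset {n : ℕ} {g : P} (hg : g ∈ Sset n) : g * g = 1 := by
  obtain rfl | ⟨i, hi, -, rfl⟩ := mem_Sset_iff.1 hg
  · exact Equiv.swap_mul_self _ _
  · ext a
    simp only [Equiv.Perm.mul_apply, sgen_apply hi, Equiv.Perm.one_apply]
    split_ifs <;> omega

lemma mul_mul_cancel_of_mem_Sset {n : ℕ} {g : P} (hg : g ∈ Sset n) (w : P) : g * (g * w) = w := by
  rw [← mul_assoc, mul_self_of_mem_Sset hg, one_mul]

lemma inv_of_mem_Sset {n : ℕ} {g : P} (hg : g ∈ Sset n) : g⁻¹ = g :=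
  inv_eq_of_mul_eq_one_left (mul_self_of_mem_Sset hg)

lemma apply_neg_of_mem_Sset {n : ℕ} {g : P} (hg : g ∈ Sset n) (a : ℤ) : g (-a) = -g a := by
  obtain rfl | ⟨i, hi, -, rfl⟩ := mem_Sset_iff.1 hg
  · simp only [tgen_apply]
    split_ifs <;> omega
  · simp only [sgen_apply hi]
    split_ifs <;> omega

/-- The group `W_n`, presented as the subgroup generated by `S_n` so that each of its elements comes
with a word in the generators. -/
abbrev W (n : ℕ) : Subgroup P := Subgroup.closure (Sset n)

lemma apply_neg {n : ℕ} {w : P} (hw : w ∈ W n) (a : ℤ) : w (-a) = -w a := by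
  induction hw using Subgroup.closure_induction generalizing a with
  | mem g hg => exact apply_neg_of_mem_Sset hg a
  | one => rfl
  | mul u v _ _ hu hv => rw [Equiv.Perm.mul_apply, hv, hu, Equiv.Perm.mul_apply]
  | inv u _ hu => rw [Equiv.Perm.inv_eq_iff_eq, hu, Equiv.Perm.inv_def, u.apply_symm_apply]

lemma apply_zero {n : ℕ} {w : P} (hw : w ∈ W n) : w 0 = 0 := by
  have := apply_neg hw 0
  rw [neg_zero] at this
  omega

lemma apply_ne_zero {n : ℕ} {w : P} (hw : w ∈ W n) {a : ℤ} (ha : a ≠ 0) : w a ≠ 0 :=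
  fun h ↦ ha (w.injective (h.trans (apply_zero hw).symm))

/-! ### Length and the exchange condition -/

lemma list_prod_mem_W {n : ℕ} {L : List P} (hL : ∀ g ∈ L, g ∈ Sset n) : L.prod ∈ W n :=
  Subgroup.list_prod_mem _ fun g hg ↦ Subgroup.subset_closure (hL g hg)

lemma len_prod_le {n : ℕ} {L : List P} (hL : ∀ g ∈ L, g ∈ Sset n) : len n L.prod ≤ L.length :=
  Nat.sInf_le ⟨L, hL, rfl, rfl⟩

lemma exists_reduced_word {n : ℕ} {w : P} (hw : w ∈ W n) :
    ∃ L : List P, (∀ g ∈ L, g ∈ Sset n) ∧ L.prod = w ∧ L.length = len n w := by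
  obtain ⟨L, hL, hLw⟩ := Submonoid.exists_list_of_mem_closure
    ((Subgroup.closure_toSubmonoid (Sset n)).le hw)
  have hL' : ∀ g ∈ L, g ∈ Sset n := fun g hg ↦ (hL g hg).elim id fun h ↦ by
    rwa [← inv_inv g, inv_of_mem_Sset (Set.mem_inv.1 h)]
  exact Nat.sInf_mem (s := {k | ∃ L : List P, (∀ g ∈ L, g ∈ Sset n) ∧ L.prod = w ∧ L.length = k})
    ⟨_, L, hL', hLw, rfl⟩

lemma len_mul_le {n : ℕ} {v w : P} (hv : v ∈ W n) (hw : w ∈ W n) :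
    len n (v * w) ≤ len n v + len n w := by
  obtain ⟨K, hK, rfl, hKlen⟩ := exists_reduced_word hv
  obtain ⟨L, hL, rfl, hLlen⟩ := exists_reduced_word hw
  rw [← hKlen, ← hLlen, ← List.length_append, ← List.prod_append]
  exact len_prod_le (List.forall_mem_append.2 ⟨hK, hL⟩)

lemma len_le_one_of_mem_Sset {n : ℕ} {g : P} (hg : g ∈ Sset n) : len n g ≤ 1 := by
  simpa using len_prod_le (L := [g]) (by simpa using hg)

lemma prod_reverse_of_forall_mem_Sset {n : ℕ} {L : List P} (hL : ∀ g ∈ L, g ∈ Sset n) :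
    L.reverse.prod = L.prod⁻¹ := by
  rw [List.prod_inv_reverse, List.map_congr_left (fun g hg ↦ inv_of_mem_Sset (hL g hg)),
    List.map_id']

lemma len_inv (n : ℕ) (w : P) : len n w⁻¹ = len n w := by
  have key : ∀ (v : P) (k : ℕ), (∃ L : List P, (∀ g ∈ L, g ∈ Sset n) ∧ L.prod = v ∧ L.length = k) →
      ∃ L : List P, (∀ g ∈ L, g ∈ Sset n) ∧ L.prod = v⁻¹ ∧ L.length = k := by
    rintro _ _ ⟨L, hL, rfl, rfl⟩
    exact ⟨L.reverse, fun g hg ↦ hL g (List.mem_reverse.1 hg),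
      prod_reverse_of_forall_mem_Sset hL, L.length_reverse⟩
  exact congrArg sInf (Set.ext fun k ↦ ⟨fun h ↦ inv_inv w ▸ key w⁻¹ k h, key w k⟩)

/-- The reflection of `W_n` that exchanges `u` with `v` and `-u` with `-v`. For `u = -v` these are
the same exchange, which must then be performed only once. -/
def signedSwap (u v : ℤ) : P :=
  if u = -v then Equiv.swap u v else Equiv.swap u v * Equiv.swap (-u) (-v)

lemma signedSwap_neg_one_one : signedSwap (-1) 1 = tgen := by
  rw [signedSwap, if_pos rfl, Equiv.swap_comm, tgen]

lemma signedSwap_add_one {i : ℕ} (hi : 1 ≤ i) : signedSwap i (i + 1) = sgen i := by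
  rw [signedSwap, if_neg (by omega), sgen]

lemma signedSwap_neg_add_one {i : ℕ} (hi : 1 ≤ i) : signedSwap (-(i + 1)) (-i) = sgen i := by
  rw [signedSwap, if_neg (by omega)]
  ext a
  simp only [sgen_apply hi, Equiv.Perm.mul_apply, Equiv.swap_apply_def]
  split_ifs <;> omega

lemma mul_signedSwap {n : ℕ} {w : P} (hw : w ∈ W n) (u v : ℤ) :
    w * signedSwap u v = signedSwap (w u) (w v) * w := by
  have hiff : w u = -w v ↔ u = -v := by rw [← apply_neg hw, w.injective.eq_iff]
  simp only [signedSwap, hiff]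
  split_ifs
  · exact Equiv.mul_swap_eq_swap_mul _ _ _
  · rw [← mul_assoc, Equiv.mul_swap_eq_swap_mul w, mul_assoc, Equiv.mul_swap_eq_swap_mul w,
      apply_neg hw, apply_neg hw, mul_assoc]

lemma eq_signedSwap_of_apply_lt {n : ℕ} {g : P} (hg : g ∈ Sset n) {u v : ℤ} (huv : u < v)
    (hu : u ≠ 0) (hv : v ≠ 0) (h : g v < g u) : g = signedSwap u v := by
  obtain rfl | ⟨i, hi, -, rfl⟩ := mem_Sset_iff.1 hg
  · obtain ⟨rfl, rfl⟩ : u = -1 ∧ v = 1 := by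
      simp only [tgen_apply] at h
      split_ifs at h <;> omega
    exact signedSwap_neg_one_one.symm
  · obtain ⟨rfl, rfl⟩ | ⟨rfl, rfl⟩ : (u = i ∧ v = i + 1) ∨ (u = -(i + 1) ∧ v = -i) := by
      simp only [sgen_apply hi] at h
      split_ifs at h <;> omega
    · exact (signedSwap_add_one hi).symm
    · exact (signedSwap_neg_add_one hi).symm

lemma exists_eraseIdx_prod_eq {n : ℕ} {L : List P} (hL : ∀ g ∈ L, g ∈ Sset n) {u v : ℤ}
    (huv : u < v) (hu : u ≠ 0) (hv : v ≠ 0) (h : L.prod v < L.prod u) :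
    ∃ k < L.length, (L.eraseIdx k).prod = L.prod * signedSwap u v := by
  induction L with
  | nil => exact absurd h (by simpa using huv.le)
  | cons g L ih =>
    obtain ⟨hg, hL⟩ := List.forall_mem_cons.1 hL
    obtain hlt | hge := lt_or_ge (L.prod v) (L.prod u)
    · obtain ⟨k, hk, hprod⟩ := ih hL hlt
      exact ⟨k + 1, by simpa using hk, by simp [hprod, mul_assoc]⟩
    · have hw := list_prod_mem_W hL
      have hg_eq : g = signedSwap (L.prod u) (L.prod v) :=
        eq_signedSwap_of_apply_lt hg (hge.lt_of_ne (L.prod.injective.ne huv.ne))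
          (apply_ne_zero hw hu) (apply_ne_zero hw hv) (by simpa using h)
      refine ⟨0, by simp, ?_⟩
      rw [List.eraseIdx_zero, List.tail_cons, List.prod_cons, mul_assoc, mul_signedSwap hw, ← hg_eq,
        ← mul_assoc, mul_self_of_mem_Sset hg, one_mul]

lemma len_mul_signedSwap_lt {n : ℕ} {w : P} (hw : w ∈ W n) {u v : ℤ} (huv : u < v) (hu : u ≠ 0)
    (hv : v ≠ 0) (h : w v < w u) : len n (w * signedSwap u v) < len n w := by
  obtain ⟨L, hL, rfl, hlen⟩ := exists_reduced_word hw
  obtain ⟨k, hk, hprod⟩ := exists_eraseIdx_prod_eq hL huv hu hv h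
  have := len_prod_le fun g (hg : g ∈ L.eraseIdx k) ↦ hL g (List.mem_of_mem_eraseIdx hg)
  rw [hprod, List.length_eraseIdx_of_lt hk] at this
  omega

lemma len_mul_sgen_lt {n i : ℕ} {w : P} (hw : w ∈ W n) (hi : 1 ≤ i) (h : w (i + 1) < w i) :
    len n (w * sgen i) < len n w := by
  rw [← signedSwap_add_one hi]
  exact len_mul_signedSwap_lt hw (by omega) (by omega) (by omega) h

lemma len_mul_tgen_lt {n : ℕ} {w : P} (hw : w ∈ W n) (h : w 1 < 0) :
    len n (w * tgen) < len n w := by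
  rw [← signedSwap_neg_one_one]
  refine len_mul_signedSwap_lt hw (by omega) (by omega) (by omega) ?_
  rw [apply_neg hw]
  omega

lemma len_lt_len_mul_sgen_iff {n i : ℕ} {w : P} (hw : w ∈ W n) (hi : 1 ≤ i) (hin : i + 1 ≤ n) :
    len n w < len n (w * sgen i) ↔ w i < w (i + 1) := by
  have hs := sgen_mem_Sset hi hin
  refine ⟨fun h ↦ ?_, fun h ↦ ?_⟩
  · by_contra! hle
    exact (len_mul_sgen_lt hw hi (hle.lt_of_ne (w.injective.ne (by omega)))).not_gt h
  · have := len_mul_sgen_lt (mul_mem hw (Subgroup.subset_closure hs)) hi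
      (by simpa [sgen_apply_self hi, sgen_apply_add_one hi] using h)
    rwa [mul_assoc, mul_self_of_mem_Sset hs, mul_one] at this

lemma len_lt_len_mul_tgen_iff {n : ℕ} {w : P} (hw : w ∈ W n) :
    len n w < len n (w * tgen) ↔ 0 < w 1 := by
  have ht : tgen ∈ Sset n := Set.mem_insert _ _
  refine ⟨fun h ↦ ?_, fun h ↦ ?_⟩
  · by_contra! hle
    exact (len_mul_tgen_lt hw (hle.lt_of_ne (apply_ne_zero hw one_ne_zero))).not_gt h
  · have := len_mul_tgen_lt (mul_mem hw (Subgroup.subset_closure ht))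
      (by simpa [tgen_apply, apply_neg hw] using h)
    rwa [mul_assoc, mul_self_of_mem_Sset ht, mul_one] at this

lemma len_sgen_mul_lt {n i : ℕ} {w : P} (hw : w ∈ W n) (hi : 1 ≤ i) (hin : i + 1 ≤ n)
    (h : w⁻¹ (i + 1) < w⁻¹ i) : len n (sgen i * w) < len n w := by
  have := len_mul_sgen_lt (inv_mem hw) hi h
  rwa [← len_inv n (sgen i * w), mul_inv_rev, inv_of_mem_Sset (sgen_mem_Sset hi hin), ← len_inv n w]

lemma eq_one_of_no_descent {n : ℕ} {w : P} (hw : w ∈ W n) (h_one : 0 < w 1)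
    (h_succ : ∀ i : ℕ, 1 ≤ i → i + 1 ≤ n → w i < w (i + 1)) : w = 1 := by
  obtain ⟨L, hL, hLw, hlen⟩ := exists_reduced_word hw
  obtain rfl | ⟨K, g, rfl⟩ := L.eq_nil_or_concat'
  · exact hLw.symm
  · obtain ⟨hK, hg⟩ := List.forall_mem_append.1 hL
    rw [List.forall_mem_singleton] at hg
    have hdescent : len n (w * g) < len n w := by
      have hwg : w * g = K.prod := by
        rw [← hLw, List.prod_append, List.prod_singleton, mul_assoc, mul_self_of_mem_Sset hg,
          mul_one]
      rw [hwg, ← hlen, List.length_append]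
      exact Nat.lt_succ_of_le (len_prod_le hK)
    have hascent : len n w < len n (w * g) := by
      obtain rfl | ⟨i, hi, hin, rfl⟩ := mem_Sset_iff.1 hg
      · exact (len_lt_len_mul_tgen_iff hw).2 h_one
      · exact (len_lt_len_mul_sgen_iff hw hi hin).2 (h_succ i hi hin)
    exact absurd hdescent hascent.not_gt

/-! ### The Bruhat order -/

lemma bruhat_refl {n : ℕ} {w : P} (hw : w ∈ W n) : bruhat n w w := by
  obtain ⟨L, hL, hLw, hlen⟩ := exists_reduced_word hw
  exact ⟨L, L, hL, hLw, hlen, List.Sublist.refl L, hLw⟩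

lemma bruhat_inv {n : ℕ} {x y : P} (h : bruhat n x y) : bruhat n x⁻¹ y⁻¹ := by
  obtain ⟨L, K, hL, rfl, hlen, hKL, rfl⟩ := h
  refine ⟨L.reverse, K.reverse, fun g hg ↦ hL g (List.mem_reverse.1 hg),
    prod_reverse_of_forall_mem_Sset hL, ?_, hKL.reverse,
    prod_reverse_of_forall_mem_Sset fun g hg ↦ hL g (hKL.subset hg)⟩
  rw [len_inv, List.length_reverse, hlen]

lemma bruhat_of_bruhat_gen_mul {n : ℕ} {x y s : P} (hs : s ∈ Sset n)
    (hlt : len n (s * y) < len n y) (h : bruhat n x (s * y)) :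
    bruhat n x y ∧ bruhat n (s * x) y := by
  obtain ⟨L, K, hL, hLy, hlen, hKL, rfl⟩ := h
  have hsL : ∀ g ∈ s :: L, g ∈ Sset n := List.forall_mem_cons.2 ⟨hs, hL⟩
  have hprod : (s :: L).prod = y := by rw [List.prod_cons, hLy, mul_mul_cancel_of_mem_Sset hs]
  have hslen : (s :: L).length = len n y :=
    le_antisymm (by rw [List.length_cons]; omega) (hprod ▸ len_prod_le hsL)
  exact ⟨⟨s :: L, K, hsL, hprod, hslen, hKL.cons s, rfl⟩,
    ⟨s :: L, s :: K, hsL, hprod, hslen, hKL.cons_cons s, List.prod_cons⟩⟩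

/-! ### The Gale order -/

/-- The number of elements of `S` in the interval `[j, n]`, the statistic that defines the Gale
order. -/
noncomputable def tailCard (n : ℕ) (S : Set ℤ) (j : ℤ) : ℕ :=
  ((Finset.Icc j (n : ℤ)).filter (· ∈ S)).card

lemma tailCard_eq_add {n : ℕ} (S : Set ℤ) {j : ℤ} (hj : j ≤ n) :
    tailCard n S j = (if j ∈ S then 1 else 0) + tailCard n S (j + 1) := by
  rw [tailCard, ← Finset.insert_Icc_add_one_left_eq_Icc hj, Finset.filter_insert]
  split_ifs
  · rw [Finset.card_insert_of_notMem (by simp), add_comm, tailCard]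
  · rw [zero_add, tailCard]

lemma tailCard_eq_add_add {n i : ℕ} (S : Set ℤ) (hin : i + 1 ≤ n) :
    tailCard n S i =
      (if (i : ℤ) ∈ S then 1 else 0) +
        ((if (i + 1 : ℤ) ∈ S then 1 else 0) + tailCard n S (i + 2)) := by
  rw [tailCard_eq_add S (by omega), tailCard_eq_add S (by omega), add_assoc (i : ℤ),
    one_add_one_eq_two]

lemma tailCard_congr {n : ℕ} {S T : Set ℤ} {j : ℤ} (h : ∀ a, j ≤ a → a ≤ n → (a ∈ S ↔ a ∈ T)) :
    tailCard n S j = tailCard n T j :=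
  congrArg Finset.card (Finset.filter_congr fun a ha ↦
    h a (Finset.mem_Icc.1 ha).1 (Finset.mem_Icc.1 ha).2)

lemma tailCard_preimage {n : ℕ} (S : Set ℤ) {j : ℤ} {e : P}
    (he : ∀ a, (j ≤ e a ∧ e a ≤ n) ↔ (j ≤ a ∧ a ≤ n)) :
    tailCard n (e ⁻¹' S) j = tailCard n S j :=
  Finset.card_equiv e fun a ↦ by simp [he a]

lemma tailCard_preimage_sgen_of_ne {n i : ℕ} (hi : 1 ≤ i) (hin : i + 1 ≤ n) (S : Set ℤ) {j : ℤ}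
    (hj : 1 ≤ j) (hne : j ≠ i + 1) :
    tailCard n (sgen i ⁻¹' S) j = tailCard n S j := by
  refine tailCard_preimage S fun a ↦ ?_
  rw [sgen_apply hi]
  split_ifs <;> omega

lemma tailCard_preimage_sgen_add_one {n i : ℕ} (hi : 1 ≤ i) (hin : i + 1 ≤ n)
    (S : Set ℤ) :
    tailCard n (sgen i ⁻¹' S) (i + 1) = (if (i : ℤ) ∈ S then 1 else 0) + tailCard n S (i + 2) := by
  rw [tailCard_eq_add _ (by omega), add_assoc, one_add_one_eq_two,
    tailCard_preimage_sgen_of_ne hi hin S (by omega) (by omega), Set.mem_preimage,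
    sgen_apply_add_one hi]

/-- The Gale order on the subsets `S ∩ [1, n]` and `T ∩ [1, n]`, extended to sets of different sizes
by comparing how many elements lie in each final interval. -/
def GaleLE (n : ℕ) (S T : Set ℤ) : Prop :=
  ∀ j : ℤ, 1 ≤ j → tailCard n S j ≤ tailCard n T j

lemma GaleLE.congr {n : ℕ} {S S' T T' : Set ℤ} (h : GaleLE n S T)
    (hS : ∀ a, 1 ≤ a → (a ∈ S ↔ a ∈ S')) (hT : ∀ a, 1 ≤ a → (a ∈ T ↔ a ∈ T')) :
    GaleLE n S' T' := fun j hj ↦ by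
  rw [← tailCard_congr fun a ha _ ↦ hS a (hj.trans ha),
    ← tailCard_congr fun a ha _ ↦ hT a (hj.trans ha)]
  exact h j hj

lemma galeLE_of_forall_two_le {n : ℕ} {S T : Set ℤ}
    (h : ∀ j : ℤ, 2 ≤ j → tailCard n S j ≤ tailCard n T j) (h_one : 1 ∈ S → 1 ∈ T) :
    GaleLE n S T := by
  intro j hj
  obtain rfl | hj := hj.eq_or_lt
  · obtain rfl | hn := n.eq_zero_or_pos
    · simp [tailCard]
    rw [tailCard_eq_add S (by omega), tailCard_eq_add T (by omega)]
    have := h (1 + 1) le_rfl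
    split_ifs <;> first | omega | exact absurd (h_one ‹_›) ‹_›
  · exact h j hj

lemma GaleLE.preimage_sgen_right {n i : ℕ} (hi : 1 ≤ i) (hin : i + 1 ≤ n) {S T : Set ℤ}
    (h : GaleLE n S T) (hST : (i : ℤ) ∉ S → (i + 1 : ℤ) ∈ S → (i + 1 : ℤ) ∈ T → (i : ℤ) ∈ T) :
    GaleLE n S (sgen i ⁻¹' T) := by
  intro j hj
  -- Only the count at `j = i + 1` changes; its bound follows from those at `i` and `i + 2`.
  obtain rfl | hne := eq_or_ne j (i + 1)
  · have h_i := h i (by omega)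
    have h_add_two := h (i + 2) (by omega)
    rw [tailCard_eq_add_add S hin, tailCard_eq_add_add T hin] at h_i
    rw [tailCard_preimage_sgen_add_one hi hin, tailCard_eq_add S (by omega), add_assoc,
      one_add_one_eq_two]
    split_ifs at * <;> first | omega | tauto
  · exact (h j hj).trans_eq (tailCard_preimage_sgen_of_ne hi hin T hj hne).symm

lemma GaleLE.preimage_sgen {n i : ℕ} (hi : 1 ≤ i) (hin : i + 1 ≤ n) {S T : Set ℤ}
    (h : GaleLE n S T) (hST : (i : ℤ) ∈ S → (i + 1 : ℤ) ∉ S → (i + 1 : ℤ) ∈ T → (i : ℤ) ∈ T) :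
    GaleLE n (sgen i ⁻¹' S) (sgen i ⁻¹' T) := by
  intro j hj
  obtain rfl | hne := eq_or_ne j (i + 1)
  · have h_i := h i (by omega)
    have h_add_two := h (i + 2) (by omega)
    rw [tailCard_eq_add_add S hin, tailCard_eq_add_add T hin] at h_i
    rw [tailCard_preimage_sgen_add_one hi hin, tailCard_preimage_sgen_add_one hi hin]
    split_ifs at * <;> first | omega | tauto
  · rw [tailCard_preimage_sgen_of_ne hi hin S hj hne, tailCard_preimage_sgen_of_ne hi hin T hj hne]
    exact h j hj

lemma GaleLE.mem_iff_of_lower {n : ℕ} {S T : Set ℤ} (h : GaleLE n S T)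
    (hcard : tailCard n S 1 = tailCard n T 1)
    (hT : ∀ i : ℕ, 1 ≤ i → i + 1 ≤ n → (i + 1 : ℤ) ∈ T → (i : ℤ) ∈ T) {a : ℤ} (ha : 1 ≤ a)
    (han : a ≤ n) : a ∈ S ↔ a ∈ T := by
  have hsub : (Finset.Icc 1 (n : ℤ)).filter (· ∈ S) ⊆ (Finset.Icc 1 (n : ℤ)).filter (· ∈ T) := by
    intro c hc
    obtain ⟨hc, hcS⟩ := Finset.mem_filter.1 hc
    obtain ⟨hc_one, hcn⟩ := Finset.mem_Icc.1 hc
    refine Finset.mem_filter.2 ⟨hc, by_contra fun hcT ↦ ?_⟩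
    have hnotMem : ∀ d, c ≤ d → d ≤ n → d ∉ T := fun d hcd ↦ by
      induction d, hcd using Int.leInduction with
      | base => exact fun _ ↦ hcT
      | succ d hcd ih =>
        lift d to ℕ using by omega
        exact fun hdn hd ↦ ih (by omega) (hT d (by omega) (by omega) hd)
    have hT_zero : tailCard n T c = 0 := Finset.card_eq_zero.2 <| Finset.filter_eq_empty_iff.2
      fun d hd ↦ hnotMem d (Finset.mem_Icc.1 hd).1 (Finset.mem_Icc.1 hd).2
    have hS_pos := tailCard_eq_add S hcn
    rw [if_pos hcS] at hS_pos
    have := h c hc_one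
    omega
  have heq := Finset.eq_of_subset_of_card_le hsub hcard.ge
  simpa [ha, han] using Finset.ext_iff.1 heq a

/-! ### Negative entries are monotone -/

/-- The set of arguments that `w` sends to negative values. Its part in `[1, n]` is what the Bruhat
order controls. -/
def negSet (w : P) : Set ℤ :=
  {a | w a < 0}

lemma negSet_mul (w g : P) : negSet (w * g) = g ⁻¹' negSet w :=
  rfl

lemma GaleLE.negSet_mul_sgen {n i : ℕ} {x y : P} (hi : 1 ≤ i) (hin : i + 1 ≤ n)
    (hy : y i < y (i + 1)) (h : GaleLE n (negSet x) (negSet y)) :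
    GaleLE n (negSet x) (negSet (y * sgen i)) ∧
      GaleLE n (negSet (x * sgen i)) (negSet (y * sgen i)) := by
  have hneg : (i + 1 : ℤ) ∈ negSet y → (i : ℤ) ∈ negSet y := hy.trans
  exact ⟨h.preimage_sgen_right hi hin fun _ _ ↦ hneg, h.preimage_sgen hi hin fun _ _ ↦ hneg⟩

lemma tailCard_negSet_mul_tgen {n : ℕ} (w : P) {j : ℤ} (hj : 2 ≤ j) :
    tailCard n (negSet (w * tgen)) j = tailCard n (negSet w) j := by
  refine tailCard_congr fun a ha _ ↦ ?_
  rw [negSet_mul, Set.mem_preimage, tgen_apply, if_neg (by omega), if_neg (by omega)]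

lemma GaleLE.negSet_mul_tgen {n : ℕ} {x y : P} (hy : y (-1) < 0)
    (h : GaleLE n (negSet x) (negSet y)) :
    GaleLE n (negSet x) (negSet (y * tgen)) ∧
      GaleLE n (negSet (x * tgen)) (negSet (y * tgen)) := by
  have h_one : 1 ∈ negSet (y * tgen) := by
    rwa [negSet_mul, Set.mem_preimage, tgen_apply, if_pos rfl]
  refine ⟨galeLE_of_forall_two_le (fun j hj ↦ ?_) fun _ ↦ h_one,
    galeLE_of_forall_two_le (fun j hj ↦ ?_) fun _ ↦ h_one⟩
  · rw [tailCard_negSet_mul_tgen y hj]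
    exact h j (by omega)
  · rw [tailCard_negSet_mul_tgen x hj, tailCard_negSet_mul_tgen y hj]
    exact h j (by omega)

lemma GaleLE.negSet_mul_gen {n : ℕ} {x y g : P} (hy : y ∈ W n) (hg : g ∈ Sset n)
    (hlt : len n y < len n (y * g)) (h : GaleLE n (negSet x) (negSet y)) :
    GaleLE n (negSet x) (negSet (y * g)) ∧ GaleLE n (negSet (x * g)) (negSet (y * g)) := by
  obtain rfl | ⟨i, hi, hin, rfl⟩ := mem_Sset_iff.1 hg
  · refine h.negSet_mul_tgen ?_
    rw [apply_neg hy, neg_lt_zero]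
    exact (len_lt_len_mul_tgen_iff hy).1 hlt
  · exact h.negSet_mul_sgen hi hin ((len_lt_len_mul_sgen_iff hy hi hin).1 hlt)

lemma length_eq_len_prod_of_append_singleton {n : ℕ} {L : List P} {g : P} (hL : ∀ h ∈ L, h ∈ Sset n)
    (hg : g ∈ Sset n) (hlen : (L ++ [g]).length = len n (L ++ [g]).prod) :
    L.length = len n L.prod := by
  refine le_antisymm ?_ (len_prod_le hL)
  have := len_mul_le (list_prod_mem_W hL) (Subgroup.subset_closure hg)
  have := len_le_one_of_mem_Sset hg
  rw [List.length_append, List.length_singleton, List.prod_append, List.prod_singleton] at hlen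
  omega

lemma galeLE_negSet_of_bruhat {n : ℕ} {x y : P} (h : bruhat n x y) :
    GaleLE n (negSet x) (negSet y) := by
  obtain ⟨L, K, hL, rfl, hlen, hKL, rfl⟩ := h
  induction L using List.reverseRecOn generalizing K with
  | nil => rw [List.sublist_nil.1 hKL]; exact fun _ _ ↦ le_rfl
  | append_singleton L g ih =>
    obtain ⟨hL, hg⟩ := List.forall_mem_append.1 hL
    rw [List.forall_mem_singleton] at hg
    have hlenL := length_eq_len_prod_of_append_singleton hL hg hlen
    rw [List.prod_append, List.prod_singleton] at hlen ⊢
    have hlt : len n L.prod < len n (L.prod * g) := by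
      rw [← hlen, ← hlenL, List.length_append]
      exact Nat.lt_succ_self _
    obtain ⟨K, K', rfl, hKL, hK'⟩ := List.sublist_append_iff.1 hKL
    have hstep := (ih K hL hlenL hKL).negSet_mul_gen (list_prod_mem_W hL) hg hlt
    rw [List.prod_append]
    obtain rfl | rfl := List.sublist_singleton.1 hK'
    · rw [List.prod_nil, mul_one]
      exact hstep.1
    · rw [List.prod_singleton]
      exact hstep.2

/-! ### Grassmannian permutations -/

lemma SymLR_le_SymN (n l : ℕ) : SymLR n l ≤ SymN n :=
  Subgroup.closure_mono (Set.image_mono fun _ hi ↦ ⟨hi.1, hi.2.1⟩)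

lemma SymN_le_W (n : ℕ) : SymN n ≤ W n :=
  Subgroup.closure_mono (Set.subset_insert _ _)

lemma sgen_mem_SymN {n i : ℕ} (hi : 1 ≤ i) (hin : i + 1 ≤ n) : sgen i ∈ SymN n :=
  Subgroup.subset_closure ⟨i, ⟨hi, by omega⟩, rfl⟩

lemma apply_le_iff_of_mem_closure {I : Set ℕ} (hI : ∀ i ∈ I, 1 ≤ i) {k : ℤ}
    (hk : ∀ i ∈ I, k ≠ i ∧ k ≠ -(i + 1)) {b : P} (hb : b ∈ Subgroup.closure (sgen '' I)) (a : ℤ) :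
    b a ≤ k ↔ a ≤ k := by
  induction hb using Subgroup.closure_induction generalizing a with
  | mem _ hg =>
    obtain ⟨i, hi, rfl⟩ := hg
    exact sgen_apply_le_iff (hI i hi) (hk i hi).1 (hk i hi).2 a
  | one => rfl
  | mul u v _ _ hu hv => exact (hu _).trans (hv a)
  | inv u _ hu => rw [← hu, Equiv.Perm.inv_def, u.apply_symm_apply]

lemma apply_le_zero_iff_of_mem_SymN {n : ℕ} {b : P} (hb : b ∈ SymN n) (a : ℤ) :
    b a ≤ 0 ↔ a ≤ 0 :=
  apply_le_iff_of_mem_closure (fun _ hi ↦ hi.1) (fun i hi ↦ by have := hi.1; omega) hb a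

lemma apply_le_n_iff_of_mem_SymN {n : ℕ} {b : P} (hb : b ∈ SymN n) (a : ℤ) :
    b a ≤ n ↔ a ≤ n :=
  apply_le_iff_of_mem_closure (fun _ hi ↦ hi.1)
    (fun i hi ↦ by have := hi.1; have := hi.2; omega) hb a

lemma apply_neg_iff_of_mem_SymN {n : ℕ} {b : P} (hb : b ∈ SymN n) (a : ℤ) : b a < 0 ↔ a < 0 := by
  simp only [← Int.le_sub_one_iff]
  exact apply_le_iff_of_mem_closure (fun _ hi ↦ hi.1) (fun i hi ↦ by have := hi.1; omega) hb a

lemma apply_le_iff_of_mem_SymLR {n l : ℕ} {b : P} (hb : b ∈ SymLR n l) (a : ℤ) :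
    b a ≤ l ↔ a ≤ l :=
  apply_le_iff_of_mem_closure (fun _ hi ↦ hi.1)
    (fun i hi ↦ by have := hi.2.2; omega) hb a

/-- Grassmannian permutations, increasing on each of the blocks `[1, l]` and `[l + 1, n]`. They are
the elements of `Y_{l,n-l}`, described through their values. -/
structure IsGrassmannian (n l : ℕ) (b : P) : Prop where
  mem_SymN : b ∈ SymN n
  lt_of_lt : ∀ i j : ℤ, 1 ≤ i → i < j → j ≤ n → (i ≤ l ↔ j ≤ l) → b i < b j

lemma lt_of_mem_Yset {n l i : ℕ} {b : P} (hb : b ∈ Yset n l) (hi : 1 ≤ i) (hin : i + 1 ≤ n)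
    (hil : i ≠ l) : b i < b (i + 1) := by
  by_contra! hle
  have hmin := hb.2 (sgen i) (Subgroup.subset_closure ⟨i, ⟨hi, by omega, hil⟩, rfl⟩)
  exact hmin.not_gt <| len_mul_sgen_lt (SymN_le_W n hb.1) hi
    (hle.lt_of_ne (b.injective.ne (by omega)))

lemma isGrassmannian_of_mem_Yset {n l : ℕ} {b : P} (hb : b ∈ Yset n l) : IsGrassmannian n l b where
  mem_SymN := hb.1
  lt_of_lt i j hi hij hjn hl := by
    induction j, Int.add_one_le_of_lt hij using Int.leInduction with
    | base =>
      lift i to ℕ using by omega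
      exact lt_of_mem_Yset hb (by omega) (by omega) (by omega)
    | succ j hj ih =>
      lift j to ℕ using by omega
      exact (ih (by omega) (by omega) (by omega)).trans
        (lt_of_mem_Yset hb (by omega) (by omega) (by omega))

/-- The image of `(-∞, l]` under `b`. For `b ∈ 𝔖_n` it is determined by its part `b([1, l])` in
`[1, n]`. -/
def lowImage (l : ℕ) (b : P) : Set ℤ :=
  {a | b⁻¹ a ≤ l}

lemma mem_lowImage {l : ℕ} {b : P} {a : ℤ} : a ∈ lowImage l b ↔ b⁻¹ a ≤ l :=
  Iff.rfl

lemma lowImage_sgen_mul {n i : ℕ} (hi : 1 ≤ i) (hin : i + 1 ≤ n) (l : ℕ) (b : P) :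
    lowImage l (sgen i * b) = sgen i ⁻¹' lowImage l b := by
  ext a
  rw [mem_lowImage, mul_inv_rev, inv_of_mem_Sset (sgen_mem_Sset hi hin)]
  rfl

lemma tailCard_lowImage {n l : ℕ} {b : P} (hb : b ∈ SymN n) :
    tailCard n (lowImage l b) 1 = tailCard n (Set.Iic (l : ℤ)) 1 := by
  refine tailCard_preimage (Set.Iic (l : ℤ)) fun a ↦ ?_
  have h_zero := apply_le_zero_iff_of_mem_SymN (inv_mem hb) a
  have h_n := apply_le_n_iff_of_mem_SymN (inv_mem hb) a
  omega

lemma IsGrassmannian.sgen_mul {n l i : ℕ} {c : P} (hc : IsGrassmannian n l c) (hi : 1 ≤ i)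
    (hin : i + 1 ≤ n) (hnotMem : (i : ℤ) ∉ lowImage l c) (hmem : (i + 1 : ℤ) ∈ lowImage l c) :
    IsGrassmannian n l (sgen i * c) where
  mem_SymN := mul_mem (sgen_mem_SymN hi hin) hc.mem_SymN
  lt_of_lt p q hp hpq hqn hl := by
    have hpos : 0 < c p := by
      have := apply_le_zero_iff_of_mem_SymN hc.mem_SymN p
      omega
    refine sgen_apply_lt_sgen_apply hi hpos (hc.lt_of_lt p q hp hpq hqn hl) fun hcp hcq ↦ ?_
    rw [← hcp, mem_lowImage, Equiv.Perm.inv_def, c.symm_apply_apply] at hnotMem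
    rw [← hcq, mem_lowImage, Equiv.Perm.inv_def, c.symm_apply_apply] at hmem
    exact hnotMem (hl.2 hmem)

lemma IsGrassmannian.eq_of_forall_mem_iff {n l : ℕ} {b c : P} (hb : IsGrassmannian n l b)
    (hc : IsGrassmannian n l c)
    (h : ∀ a : ℤ, 1 ≤ a → a ≤ n → (a ∈ lowImage l b ↔ a ∈ lowImage l c)) : b = c := by
  have hπ : c⁻¹ * b ∈ SymN n := mul_mem (inv_mem hc.mem_SymN) hb.mem_SymN
  have hπ_zero := apply_le_zero_iff_of_mem_SymN hπ
  have hπ_n := apply_le_n_iff_of_mem_SymN hπ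
  have hπ_l (p : ℤ) (hp : 1 ≤ p) (hpn : p ≤ n) : (c⁻¹ * b) p ≤ l ↔ p ≤ l := by
    have hbp := h (b p) (by have := apply_le_zero_iff_of_mem_SymN hb.mem_SymN p; omega)
      ((apply_le_n_iff_of_mem_SymN hb.mem_SymN p).2 hpn)
    rw [mem_lowImage, mem_lowImage, Equiv.Perm.inv_def b, b.symm_apply_apply] at hbp
    exact hbp.symm
  have hcπ (p : ℤ) : c ((c⁻¹ * b) p) = b p := c.apply_symm_apply (b p)
  refine (inv_mul_eq_one.1 (eq_one_of_no_descent (SymN_le_W n hπ) ?_ fun i hi hin ↦ ?_)).symm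
  · have := hπ_zero 1
    omega
  · by_contra! hle
    have hlt := hle.lt_of_ne ((c⁻¹ * b).injective.ne (by omega))
    have hi_pos := hπ_zero (i + 1)
    have hi_n := hπ_n i
    have hi_l := hπ_l i (by omega) (by omega)
    have hi_l' := hπ_l (i + 1) (by omega) (by omega)
    have hb_lt := hb.lt_of_lt i (i + 1) (by omega) (by omega) (by omega) (by omega)
    have hc_lt := hc.lt_of_lt _ _ (by omega) hlt (by omega) (by omega)
    rw [hcπ, hcπ] at hc_lt
    exact hc_lt.not_gt hb_lt

lemma IsGrassmannian.len_sgen_mul_lt {n l i : ℕ} {c : P} (hc : IsGrassmannian n l c) (hi : 1 ≤ i)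
    (hin : i + 1 ≤ n) (hnotMem : (i : ℤ) ∉ lowImage l c) (hmem : (i + 1 : ℤ) ∈ lowImage l c) :
    len n (sgen i * c) < len n c :=
  Hyperoctahedral.len_sgen_mul_lt (SymN_le_W n hc.mem_SymN) hi hin
    (lt_of_le_of_lt (mem_lowImage.1 hmem) (not_le.1 hnotMem))

lemma IsGrassmannian.bruhat_of_galeLE {n l : ℕ} {b c : P} (hb : IsGrassmannian n l b)
    (hc : IsGrassmannian n l c) (h : GaleLE n (lowImage l b) (lowImage l c)) : bruhat n b c := by
  induction hk : len n c using Nat.strong_induction_on generalizing b c with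
  | h k ih =>
  by_cases hlower : ∀ i : ℕ, 1 ≤ i → i + 1 ≤ n →
      (i + 1 : ℤ) ∈ lowImage l c → (i : ℤ) ∈ lowImage l c
  · have hcard : tailCard n (lowImage l b) 1 = tailCard n (lowImage l c) 1 := by
      rw [tailCard_lowImage hb.mem_SymN, tailCard_lowImage hc.mem_SymN]
    obtain rfl := hb.eq_of_forall_mem_iff hc fun a ↦ h.mem_iff_of_lower hcard hlower
    exact bruhat_refl (SymN_le_W n hb.mem_SymN)
  · push Not at hlower
    obtain ⟨i, hi, hin, hcmem, hcnotMem⟩ := hlower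
    have hs := sgen_mem_Sset hi hin
    have hlt := hc.len_sgen_mul_lt hi hin hcnotMem hcmem
    have hsc := hc.sgen_mul hi hin hcnotMem hcmem
    by_cases hbdesc : (i : ℤ) ∉ lowImage l b ∧ (i + 1 : ℤ) ∈ lowImage l b
    · have hgale : GaleLE n (lowImage l (sgen i * b)) (lowImage l (sgen i * c)) := by
        rw [lowImage_sgen_mul hi hin, lowImage_sgen_mul hi hin]
        exact h.preimage_sgen hi hin fun hb_i ↦ absurd hb_i hbdesc.1
      have hle := ih _ (hk ▸ hlt) (hb.sgen_mul hi hin hbdesc.1 hbdesc.2) hsc hgale rfl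
      simpa only [mul_mul_cancel_of_mem_Sset hs] using (bruhat_of_bruhat_gen_mul hs hlt hle).2
    · have hgale : GaleLE n (lowImage l b) (lowImage l (sgen i * c)) := by
        rw [lowImage_sgen_mul hi hin]
        exact h.preimage_sgen_right hi hin fun hb_i hb_succ ↦ absurd ⟨hb_i, hb_succ⟩ hbdesc
      exact (bruhat_of_bruhat_gen_mul hs hlt (ih _ (hk ▸ hlt) hb hsc hgale rfl)).1

/-! ### The signs of `a_l` -/

lemma rgen_succ_apply (k : ℕ) (a : ℤ) : rgen (k + 1) a =
    if a = 1 then -(k + 1 : ℤ) else if a = -1 then (k + 1 : ℤ) else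
      if 1 < a ∧ a ≤ k + 1 then a - 1 else if a < -1 ∧ -(k + 1 : ℤ) ≤ a then a + 1 else a := by
  induction k with
  | zero =>
    rw [zero_add, rgen, tgen_apply]
    split_ifs <;> omega
  | succ k ih =>
    rw [rgen, Equiv.Perm.mul_apply, ih, sgen_apply (by omega)]
    push_cast
    split_ifs <;> omega

lemma al_succ (l : ℕ) : al (l + 1) = al l * rgen (l + 1) := by
  simp [al, List.range_succ]

lemma al_apply (l : ℕ) (a : ℤ) : al l a =
    if 1 ≤ a ∧ a ≤ l then a - (l + 1) else if a ≤ -1 ∧ -(l : ℤ) ≤ a then a + (l + 1) else a := by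
  induction l generalizing a with
  | zero =>
    rw [if_neg (by omega), if_neg (by omega)]
    rfl
  | succ l ih =>
    rw [al_succ, Equiv.Perm.mul_apply, ih, rgen_succ_apply]
    push_cast
    split_ifs <;> omega

lemma al_inv (l : ℕ) : (al l)⁻¹ = al l := by
  refine inv_eq_of_mul_eq_one_left (Equiv.ext fun a ↦ ?_)
  rw [Equiv.Perm.mul_apply, al_apply, al_apply, Equiv.Perm.one_apply]
  split_ifs <;> omega

lemma al_apply_neg_iff {l : ℕ} {a : ℤ} (ha : 1 ≤ a) : al l a < 0 ↔ a ≤ l := by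
  rw [al_apply]
  split_ifs <;> omega

lemma al_mul_apply_neg_iff {n l : ℕ} {σ : P} (hσ : σ ∈ SymLR n l) {k : ℤ} (hk : 1 ≤ k) :
    (al l * σ) k < 0 ↔ k ≤ l := by
  have hσk : 1 ≤ σ k := by
    have := apply_le_zero_iff_of_mem_SymN (SymLR_le_SymN n l hσ) k
    omega
  exact (al_apply_neg_iff hσk).trans (apply_le_iff_of_mem_SymLR hσ k)

lemma inv_al_mul_apply_neg_iff {n l : ℕ} {σ : P} (hσ : σ ∈ SymLR n l) {k : ℤ} (hk : 1 ≤ k) :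
    (al l * σ)⁻¹ k < 0 ↔ k ≤ l := by
  rw [mul_inv_rev, al_inv]
  exact (apply_neg_iff_of_mem_SymN (inv_mem (SymLR_le_SymN n l hσ)) _).trans (al_apply_neg_iff hk)

lemma mem_negSet_mul_mul_inv_iff {n l : ℕ} {u b c : P} (hu : u ∈ SymN n) (hb : b ∈ SymN n)
    (hc : ∀ k, 1 ≤ k → (c k < 0 ↔ k ≤ l)) {a : ℤ} (ha : 1 ≤ a) :
    a ∈ negSet (u * c * b⁻¹) ↔ a ∈ lowImage l b := by
  have hba : 1 ≤ b⁻¹ a := by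
    have := apply_le_zero_iff_of_mem_SymN (inv_mem hb) a
    omega
  exact (apply_neg_iff_of_mem_SymN hu _).trans (hc _ hba)

lemma bruhat_of_bruhat_mul_mul_inv {n l : ℕ} {u u' b b' c c' : P} (hu : u ∈ SymN n)
    (hu' : u' ∈ SymN n) (hb : b ∈ Yset n l) (hb' : b' ∈ Yset n l)
    (hc : ∀ k, 1 ≤ k → (c k < 0 ↔ k ≤ l)) (hc' : ∀ k, 1 ≤ k → (c' k < 0 ↔ k ≤ l))
    (h : bruhat n (u * c * b⁻¹) (u' * c' * b'⁻¹)) : bruhat n b b' :=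
  (isGrassmannian_of_mem_Yset hb).bruhat_of_galeLE (isGrassmannian_of_mem_Yset hb') <|
    (galeLE_negSet_of_bruhat h).congr
      (fun _ ↦ mem_negSet_mul_mul_inv_iff hu hb.1 hc)
      (fun _ ↦ mem_negSet_mul_mul_inv_iff hu' hb'.1 hc')

end Hyperoctahedral

/-- If `ℓ_t(x) = ℓ_t(y) = l` and `x ≤ y` (Bruhat), then
`a_x ≤ a_y` and `b_x ≤ b_y` for the canonical decompositions. -/
theorem decomp_bruhat_mono (n l : ℕ) (hn : 1 ≤ n) (x y : P)
    (hx : x ∈ Wset n) (hy : y ∈ Wset n)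
    (htx : tlen n x = l) (hty : tlen n y = l) (hxy : bruhat n x y)
    (ax σx bx ay σy by' : P)
    (hdx : IsDecomp n l x ax σx bx) (hdy : IsDecomp n l y ay σy by') :
    bruhat n ax ay ∧ bruhat n bx by' := by
  obtain ⟨hax, hbx, hσx, rfl, -⟩ := hdx
  obtain ⟨hay, hby, hσy, rfl, -⟩ := hdy
  have hinv (a σ b : P) : (a * al l * σ * b⁻¹)⁻¹ = b * (al l * σ)⁻¹ * a⁻¹ := by group
  constructor
  · have hxy_inv := Hyperoctahedral.bruhat_inv hxy
    rw [hinv, hinv] at hxy_inv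
    exact Hyperoctahedral.bruhat_of_bruhat_mul_mul_inv hbx.1 hby.1 hax hay
      (fun _ ↦ Hyperoctahedral.inv_al_mul_apply_neg_iff hσx)
      (fun _ ↦ Hyperoctahedral.inv_al_mul_apply_neg_iff hσy) hxy_inv
  · rw [mul_assoc ax, mul_assoc ay] at hxy
    exact Hyperoctahedral.bruhat_of_bruhat_mul_mul_inv hax.1 hay.1 hbx hby
      (fun _ ↦ Hyperoctahedral.al_mul_apply_neg_iff hσx)
      (fun _ ↦ Hyperoctahedral.al_mul_apply_neg_iff hσy) hxy
end
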